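/- arXiv:2111.09923 — 2 statements merged into one kernel-verified Lean document; each statement's English description precedes it below -/
import Mathlib

section
/- Let n ≥ 3 be an odd integer and ε > 0. There exist constants c, C > 0 depending only on n and ε such that: for every real-split central division ℚ-algebra A of degree n, every order 𝒪 ⊆ A, every z ∈ GL_n(ℝ), every positive integer m, and every δ with 0 < δ ≤ c·m^{-2-ε}, the set 𝒪(m; z, δ) is finite with #𝒪(m; z, δ) ≤ C·m^ε. -/
open Matrix

/-- `IsSO k` : `k ∈ SO(n)`. -/
def IsSO {n : ℕ} (k : Matrix (Fin n) (Fin n) ℝ) : Prop :=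
  kᵀ * k = 1 ∧ k.det = 1

/-- An order in a `ℚ`-algebra: a subring which is finitely generated as a `ℤ`-module and
contains a `ℚ`-basis of the algebra. -/
def IsOrder (A : Type*) [Ring A] [Algebra ℚ A] (O : Subring A) : Prop :=
  O.toAddSubgroup.FG ∧ Submodule.span ℚ (O : Set A) = ⊤

/-- The set `𝒪(m; z, δ)`. -/
noncomputable def OSet {n : ℕ} {A : Type*} [DivisionRing A] [CharZero A]
    (ι : A →ₐ[ℚ] Matrix (Fin n) (Fin n) ℝ) (O : Subring A)
    (z : Matrix.GeneralLinearGroup (Fin n) ℝ) (m : ℕ) (δ : ℝ) : Set A :=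
  {γ | γ ∈ O ∧ (ι γ).det = (m : ℝ) ∧
    ∃ k : Matrix (Fin n) (Fin n) ℝ, IsSO k ∧
      ∀ i j, |(((m : ℝ) ^ (-(1 : ℝ) / (n : ℝ))) •
        ((↑z⁻¹ : Matrix (Fin n) (Fin n) ℝ) * ι γ * (↑z : Matrix (Fin n) (Fin n) ℝ)) - k) i j| < δ}

/-!
For odd `n` and `k, l ∈ SO(n)` we have `kᵀ (k - l) lᵀ = -(k - l)ᵀ`, hence `det (k - l) = 0`.
If `x` and `y` both lie in `𝒪(m; z, δ)`, then `m^(-1/n) z⁻¹ ι(x - y) z` is within `2δ` of such a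
difference, so its determinant `nr(x - y) / m` is `O(δ)`.

On the other hand `ι` identifies `ℝ ⊗ A` with `M_n(ℝ)`, so `nr(x - y) ^ n` is the norm of `x - y`
from `A` to `ℚ`; as `x - y` is integral, this is an integer, nonzero unless `x = y`. Hence
`|nr(x - y)| ≥ 1` when `x ≠ y`, and `𝒪(m; z, δ)` has at most one element as soon as `δ` is below a
small multiple of `1 / m`.
-/

open scoped TensorProduct Matrix.Norms.Elementwise

section ScalarExtension

variable {K L A B : Type*} [CommRing K] [CommRing L] [Algebra K L] [Ring A] [Algebra K A]
  [Ring B] [Algebra K B] [Algebra L B] [IsScalarTower K L B]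

variable (L) in
/-- The `L`-algebra homomorphism `L ⊗[K] A → B`, `l ⊗ x ↦ l • φ x`, extending a `K`-algebra
homomorphism `φ : A → B` into an `L`-algebra. -/
noncomputable def scalarExtension (φ : A →ₐ[K] B) : L ⊗[K] A →ₐ[L] B :=
  Algebra.TensorProduct.lift (Algebra.ofId L B) φ fun l x ↦ Algebra.commutes l (φ x)

lemma scalarExtension_tmul (φ : A →ₐ[K] B) (l : L) (x : A) :
    scalarExtension L φ (l ⊗ₜ x) = l • φ x :=
  (Algebra.TensorProduct.lift_tmul ..).trans (Algebra.smul_def l (φ x)).symm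

end ScalarExtension

section LinearDisjointness

lemma sum_smul_map_commutator_eq_zero {K L A B J : Type*} [CommRing K] [CommRing L] [Ring A]
    [Algebra K A] [Ring B] [Algebra K B] [Algebra L B] [DecidableEq J] (φ : A →ₐ[K] B)
    {r : J → L} {s : Finset J} {j₀ : J} (hj₀ : j₀ ∉ s) {a : J → A} (ha₀ : a j₀ = 1)
    (ha : ∑ j ∈ insert j₀ s, r j • φ (a j) = 0) (x : A) :
    ∑ j ∈ s, r j • φ (x * a j - a j * x) = 0 := by
  have hcomm := congrArg (fun b ↦ φ x * b - b * φ x) ha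
  simpa [Finset.sum_insert hj₀, ha₀, mul_add, add_mul, Finset.mul_sum, Finset.sum_mul, smul_sub]
    using hcomm

variable {K L D B : Type*} [Field K] [CommRing L] [Algebra K L] [DivisionRing D] [Algebra K D]
  [Algebra.IsCentral K D] [Ring B] [Algebra K B] [Algebra L B] [IsScalarTower K L B]
  [FaithfulSMul L B] {J : Type*} {r : J → L}

lemma eq_zero_of_sum_smul_map_eq_zero_of_mem_center (hr : LinearIndependent K r)
    (φ : D →ₐ[K] B) {s : Finset J} {a : J → D} (hcen : ∀ j ∈ s, a j ∈ Subalgebra.center K D)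
    (ha : ∑ j ∈ s, r j • φ (a j) = 0) : ∀ j ∈ s, a j = 0 := by
  have hscalar : ∀ j ∈ s, ∃ q : K, algebraMap K D q = a j := fun j hj ↦
    Algebra.mem_bot.1 (Algebra.IsCentral.out (hcen j hj))
  choose! q hq using hscalar
  have hrel : ∑ j ∈ s, q j • r j = 0 := by
    apply FaithfulSMul.algebraMap_injective L B
    rw [map_zero, ← ha, map_sum]
    refine Finset.sum_congr rfl fun j hj ↦ ?_
    rw [← hq j hj, φ.commutes, Algebra.smul_def, Algebra.smul_def, map_mul,
      Algebra.commutes, ← IsScalarTower.algebraMap_apply]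
  intro j hj
  rw [← hq j hj, linearIndependent_iff'.1 hr s q hrel j hj, map_zero]

/- After one coefficient is scaled to `1`, taking commutators with `x : D` removes that term, so by
induction all coefficients of the scaled relation are central, i.e. lie in `K`. -/
lemma eq_zero_of_sum_smul_map_eq_zero (hr : LinearIndependent K r) (φ : D →ₐ[K] B)
    (s : Finset J) (a : J → D) (ha : ∑ j ∈ s, r j • φ (a j) = 0) : ∀ j ∈ s, a j = 0 := by
  classical
  induction s using Finset.induction_on generalizing a with
  | empty => simp
  | insert j₀ s hj₀ ih =>
    by_cases h₀ : a j₀ = 0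
    · rw [Finset.sum_insert hj₀, h₀, map_zero, smul_zero, zero_add] at ha
      exact (Finset.forall_mem_insert _ _ _).2 ⟨h₀, ih a ha⟩
    · set b : J → D := fun j ↦ (a j₀)⁻¹ * a j with hb
      have hb₀ : b j₀ = 1 := inv_mul_cancel₀ h₀
      have hbsum : ∑ j ∈ insert j₀ s, r j • φ (b j) = 0 := by
        simpa only [hb, Finset.mul_sum, map_mul, mul_smul_comm, mul_zero] using
          congrArg (φ (a j₀)⁻¹ * ·) ha
      have hcen : ∀ j ∈ insert j₀ s, b j ∈ Subalgebra.center K D := by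
        refine (Finset.forall_mem_insert _ _ _).2 ⟨hb₀ ▸ one_mem _, fun j hj ↦ ?_⟩
        refine Subalgebra.mem_center_iff.2 fun x ↦ sub_eq_zero.1 ?_
        exact ih _ (sum_smul_map_commutator_eq_zero φ hj₀ hb₀ hbsum x) j hj
      have hb0 := eq_zero_of_sum_smul_map_eq_zero_of_mem_center hr φ hcen hbsum j₀
        (Finset.mem_insert_self _ _)
      exact absurd (hb₀.symm.trans hb0) one_ne_zero

lemma scalarExtension_injective (φ : D →ₐ[K] B) : Function.Injective (scalarExtension L φ) := by
  refine (injective_iff_map_eq_zero _).2 fun t ht ↦ ?_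
  let b := Module.Free.chooseBasis K L
  obtain ⟨c, rfl⟩ := TensorProduct.eq_repr_basis_left b t
  simp only [Finsupp.sum, map_sum, scalarExtension_tmul] at ht
  have hc := eq_zero_of_sum_smul_map_eq_zero b.linearIndependent φ c.support c ht
  exact Finset.sum_eq_zero fun j hj ↦ by simp only [hc j hj, TensorProduct.tmul_zero]

end LinearDisjointness

section Norm

lemma norm_one_tmul {R S A : Type*} [CommRing R] [CommRing S] [Algebra R S] [Ring A] [Algebra R A]
    [Module.Free R A] [Module.Finite R A] (x : A) :
    Algebra.norm S ((1 : S) ⊗ₜ[R] x) = algebraMap R S (Algebra.norm R x) := by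
  rw [Algebra.norm_apply, Algebra.norm_apply, ← LinearMap.det_baseChange, Algebra.baseChange_lmul]

lemma norm_map_eq_algebraMap_norm {K L D B : Type*} [Field K] [Field L] [Algebra K L]
    [DivisionRing D] [Algebra K D] [Algebra.IsCentral K D] [Module.Finite K D] [Ring B]
    [Nontrivial B] [Algebra K B] [Algebra L B] [IsScalarTower K L B] [Module.Finite L B]
    (hdim : Module.finrank K D = Module.finrank L B) (φ : D →ₐ[K] B) (x : D) :
    Algebra.norm L (φ x) = algebraMap K L (Algebra.norm K x) := by
  have hbij : Function.Bijective (scalarExtension L φ) := by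
    refine ⟨scalarExtension_injective φ, ?_⟩
    exact (LinearMap.injective_iff_surjective_of_finrank_eq_finrank
      ((Module.finrank_baseChange ..).trans hdim) (f := (scalarExtension L φ).toLinearMap)).1
        (scalarExtension_injective φ)
  rw [← norm_one_tmul, ← Algebra.norm_eq_of_algEquiv (AlgEquiv.ofBijective _ hbij),
    AlgEquiv.ofBijective_apply, scalarExtension_tmul, one_smul]

variable {ν : Type*} [Fintype ν] [DecidableEq ν]

lemma leftMulMatrix_stdBasis {R : Type*} [CommRing R] (M : Matrix ν ν R) :
    Algebra.leftMulMatrix (Matrix.stdBasis R ν ν) M =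
      Matrix.kroneckerMap (· * ·) M (1 : Matrix ν ν R) := by
  ext ⟨i, j⟩ ⟨k, l⟩
  have hrepr (N : Matrix ν ν R) : (Matrix.stdBasis R ν ν).repr N (i, j) = N i j := by
    simp [Matrix.stdBasis]
  rw [Algebra.leftMulMatrix_eq_repr_mul, hrepr, Matrix.stdBasis_eq_single,
    Matrix.kroneckerMap_apply]
  obtain rfl | hjl := eq_or_ne j l
  · simp
  · simp [Matrix.mul_single_apply_of_ne _ _ _ _ _ hjl, hjl]

lemma norm_matrix_eq_det_pow {R : Type*} [CommRing R] (M : Matrix ν ν R) :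
    Algebra.norm R M = M.det ^ Fintype.card ν := by
  rw [Algebra.norm_eq_matrix_det (Matrix.stdBasis R ν ν), leftMulMatrix_stdBasis,
    Matrix.det_kronecker, Matrix.det_one, one_pow, mul_one]

lemma isIntegral_of_mem_spectrum {R K A : Type*} [CommRing R] [Field K] [Algebra R K] [Ring A]
    [Algebra R A] [Algebra K A] [IsScalarTower R K A] {a : A} (ha : IsIntegral R a) {μ : K}
    (hμ : μ ∈ spectrum K a) : IsIntegral R μ := by
  obtain ⟨p, hp, hpa⟩ := ha
  refine ⟨p, hp, ?_⟩
  have hmem := spectrum.subset_polynomial_aeval a (p.map (algebraMap R K)) ⟨μ, hμ, rfl⟩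
  rw [Polynomial.aeval_map_algebraMap, Polynomial.aeval_def, hpa] at hmem
  have : Nontrivial A := not_subsingleton_iff_nontrivial.1 fun _ ↦ by
    simp [spectrum.of_subsingleton] at hμ
  simpa [Polynomial.eval_map] using hmem

lemma isIntegral_det_of_isIntegral {R K : Type*} [CommRing R] [Field K] [Algebra R K]
    {M : Matrix ν ν K} (hM : IsIntegral R M) : IsIntegral R M.det := by
  let E := AlgebraicClosure K
  let M' : Matrix ν ν E := (Algebra.ofId K E).mapMatrix M
  have hM' : IsIntegral R M' := hM.map ((Algebra.ofId K E).mapMatrix.restrictScalars R)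
  refine (isIntegral_algebraMap_iff (algebraMap K E).injective).1 ?_
  have hdet : algebraMap K E M.det = M'.det := RingHom.map_det _ _
  rw [hdet, Matrix.det_eq_prod_roots_charpoly]
  refine IsIntegral.multiset_prod fun μ hμ ↦ isIntegral_of_mem_spectrum hM' ?_
  exact Matrix.mem_spectrum_iff_isRoot_charpoly.2 (Polynomial.isRoot_of_mem_roots hμ)

lemma one_le_abs_det_of_isIntegral {D : Type*} [DivisionRing D] [Algebra ℚ D]
    [Algebra.IsCentral ℚ D] [Nonempty ν] (hdim : Module.finrank ℚ D = Fintype.card ν ^ 2)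
    (φ : D →ₐ[ℚ] Matrix ν ν ℝ) {x : D} (hx : IsIntegral ℤ x) (hx₀ : x ≠ 0) :
    1 ≤ |(φ x).det| := by
  have : Module.Finite ℚ D := Module.finite_of_finrank_pos (by rw [hdim]; positivity)
  have hnorm : (φ x).det ^ Fintype.card ν = (Algebra.norm ℚ x : ℝ) := by
    rw [← norm_matrix_eq_det_pow, norm_map_eq_algebraMap_norm _ φ x, eq_ratCast]
    rw [hdim, Module.finrank_matrix, Module.finrank_self, mul_one, sq]
  have hint : IsIntegral ℤ (Algebra.norm ℚ x) := by
    rw [← isIntegral_algebraMap_iff (algebraMap ℚ ℝ).injective, eq_ratCast, ← hnorm]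
    exact (isIntegral_det_of_isIntegral (hx.map (φ.restrictScalars ℤ))).pow _
  obtain ⟨N, hN⟩ := IsIntegrallyClosed.isIntegral_iff.1 hint
  have hN₀ : N ≠ 0 := by
    rintro rfl
    exact Algebra.norm_ne_zero_iff.2 hx₀ (by rw [← hN, map_zero])
  refine (one_le_pow_iff_of_nonneg (abs_nonneg _) (Fintype.card_ne_zero (α := ν))).1 ?_
  rw [← abs_pow, hnorm, ← hN, eq_intCast]
  exact_mod_cast Int.one_le_abs hN₀

end Norm

section Determinant

variable {ν : Type*} [Fintype ν] [DecidableEq ν]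

lemma norm_det_le_factorial_mul_prod_norm {𝕜 : Type*} [NormedField 𝕜] (M : Matrix ν ν 𝕜) :
    ‖M.det‖ ≤ (Fintype.card ν).factorial * ∏ i, ‖M i‖ := by
  have hterm (σ : Equiv.Perm ν) : ‖Equiv.Perm.sign σ • ∏ i, Mᵀ (σ i) i‖ ≤ ∏ i, ‖M i‖ := by
    have hsign : ‖Equiv.Perm.sign σ • ∏ i, Mᵀ (σ i) i‖ = ‖∏ i, M i (σ i)‖ := by
      rcases Int.units_eq_one_or (Equiv.Perm.sign σ) with h | h <;> simp [h]
    rw [hsign, norm_prod]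
    exact Finset.prod_le_prod (fun _ _ ↦ norm_nonneg _) fun i _ ↦ norm_le_pi_norm (M i) (σ i)
  calc ‖M.det‖ = ‖∑ σ, Equiv.Perm.sign σ • ∏ i, Mᵀ (σ i) i‖ := by
        rw [← Matrix.det_transpose, Matrix.det_apply]
    _ ≤ ∑ _σ : Equiv.Perm ν, ∏ i, ‖M i‖ := norm_sum_le_of_le _ fun σ _ ↦ hterm σ
    _ = (Fintype.card ν).factorial * ∏ i, ‖M i‖ := by
        rw [Finset.sum_const, Finset.card_univ, Fintype.card_perm, nsmul_eq_mul]

lemma norm_det_sub_det_le {𝕜 : Type*} [NontriviallyNormedField 𝕜] (P Q : Matrix ν ν 𝕜) :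
    ‖P.det - Q.det‖ ≤ (Fintype.card ν).factorial * Fintype.card ν *
      max ‖P‖ ‖Q‖ ^ (Fintype.card ν - 1) * ‖P - Q‖ :=
  (Matrix.detRowAlternating (R := 𝕜) (n := ν)).norm_image_sub_le_of_bound (Nat.cast_nonneg _)
    norm_det_le_factorial_mul_prod_norm P Q

lemma det_sub_eq_zero_of_mem_specialOrthogonalGroup {R : Type*} [CommRing R] [IsAddTorsionFree R]
    (hodd : Odd (Fintype.card ν)) {k l : Matrix ν ν R}
    (hk : k ∈ Matrix.specialOrthogonalGroup ν R) (hl : l ∈ Matrix.specialOrthogonalGroup ν R) :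
    (k - l).det = 0 := by
  obtain ⟨hk, hkdet⟩ := Matrix.mem_specialOrthogonalGroup_iff.1 hk
  obtain ⟨hl, hldet⟩ := Matrix.mem_specialOrthogonalGroup_iff.1 hl
  have hkk : kᵀ * k = 1 := (Matrix.mem_orthogonalGroup_iff' ν R).1 hk
  have hll : l * lᵀ = 1 := (Matrix.mem_orthogonalGroup_iff ν R).1 hl
  have hconj : kᵀ * (k - l) * lᵀ = -(k - l)ᵀ := by
    rw [mul_sub, hkk, sub_mul, one_mul, mul_assoc, hll, mul_one, Matrix.transpose_sub, neg_sub]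
  have hdet := congrArg Matrix.det hconj
  simp only [Matrix.det_mul, Matrix.det_neg, Matrix.det_transpose, hkdet, hldet,
    hodd.neg_one_pow, one_mul, mul_one, neg_one_mul] at hdet
  exact self_eq_neg.1 hdet

lemma abs_det_le_of_norm_sub_le {P k l : Matrix ν ν ℝ} {η : ℝ} (hodd : Odd (Fintype.card ν))
    (hk : k ∈ Matrix.specialOrthogonalGroup ν ℝ) (hl : l ∈ Matrix.specialOrthogonalGroup ν ℝ)
    (hP : ‖P - (k - l)‖ ≤ η) (hη : η ≤ 1) :
    |P.det| ≤ (Fintype.card ν).factorial * Fintype.card ν * 3 ^ (Fintype.card ν - 1) * η := by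
  have hkl : ‖k - l‖ ≤ 2 := by
    linarith [norm_sub_le k l, entrywise_sup_norm_bound_of_unitary hk.1,
      entrywise_sup_norm_bound_of_unitary hl.1]
  have hP3 : ‖P‖ ≤ 3 := by linarith [norm_le_norm_add_norm_sub' P (k - l)]
  have hmax : max ‖P‖ ‖k - l‖ ≤ 3 := max_le hP3 (by linarith)
  calc |P.det| = ‖P.det - (k - l).det‖ := by
        rw [det_sub_eq_zero_of_mem_specialOrthogonalGroup hodd hk hl, sub_zero, Real.norm_eq_abs]
    _ ≤ _ := norm_det_sub_det_le P (k - l)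
    _ ≤ _ := by gcongr

end Determinant

lemma IsOrder.isIntegral {A : Type*} [Ring A] [Algebra ℚ A] {O : Subring A} (hO : IsOrder A O)
    {x : A} (hx : x ∈ O) : IsIntegral ℤ x := by
  refine IsIntegral.of_mem_of_fg (subalgebraOfSubring O) ?_ x hx
  exact (Submodule.fg_iff_addSubgroup_fg _).2 hO.1

section NormalizedConjugation

variable {n : ℕ} {z : Matrix.GeneralLinearGroup (Fin n) ℝ} {m : ℕ}

lemma IsSO.mem_specialOrthogonalGroup {k : Matrix (Fin n) (Fin n) ℝ} (hk : IsSO k) :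
    k ∈ Matrix.specialOrthogonalGroup (Fin n) ℝ :=
  Matrix.mem_specialOrthogonalGroup_iff.2 ⟨(Matrix.mem_orthogonalGroup_iff' _ _).2 hk.1, hk.2⟩

/-- The matrix `m^(-1/n) z⁻¹ M z` that `𝒪(m; z, δ)` compares with `SO(n)`; the scaling gives it
determinant `1` when `det M = m`. -/
noncomputable def normalizedConj (z : Matrix.GeneralLinearGroup (Fin n) ℝ) (m : ℕ)
    (M : Matrix (Fin n) (Fin n) ℝ) : Matrix (Fin n) (Fin n) ℝ :=
  (m : ℝ) ^ (-(1 : ℝ) / (n : ℝ)) •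
    ((↑z⁻¹ : Matrix (Fin n) (Fin n) ℝ) * M * (↑z : Matrix (Fin n) (Fin n) ℝ))

lemma normalizedConj_sub (M N : Matrix (Fin n) (Fin n) ℝ) :
    normalizedConj z m (M - N) = normalizedConj z m M - normalizedConj z m N := by
  simp only [normalizedConj, mul_sub, sub_mul, smul_sub]

lemma det_normalizedConj (hn : n ≠ 0) (M : Matrix (Fin n) (Fin n) ℝ) :
    (normalizedConj z m M).det = (m : ℝ)⁻¹ * M.det := by
  have hscale : ((m : ℝ) ^ (-(1 : ℝ) / (n : ℝ))) ^ n = (m : ℝ)⁻¹ := by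
    rw [← Real.rpow_mul_natCast m.cast_nonneg, div_mul_cancel₀ _ (Nat.cast_ne_zero.2 hn),
      Real.rpow_neg_one]
  rw [normalizedConj, Matrix.det_smul, Fintype.card_fin, hscale, Matrix.coe_units_inv,
    Matrix.det_conj' z.isUnit]

lemma exists_norm_normalizedConj_sub_lt_of_mem_OSet {A : Type*} [DivisionRing A] [CharZero A]
    {ι : A →ₐ[ℚ] Matrix (Fin n) (Fin n) ℝ} {O : Subring A} {δ : ℝ} (hδ : 0 < δ) {γ : A}
    (hγ : γ ∈ OSet ι O z m δ) :
    ∃ k ∈ Matrix.specialOrthogonalGroup (Fin n) ℝ, ‖normalizedConj z m (ι γ) - k‖ < δ := by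
  obtain ⟨-, -, k, hk, hclose⟩ := hγ
  exact ⟨k, hk.mem_specialOrthogonalGroup, (Matrix.norm_lt_iff hδ).2 hclose⟩

lemma inv_mul_abs_det_map_sub_le_of_mem_OSet (hodd : Odd n) {A : Type*} [DivisionRing A]
    [CharZero A] {ι : A →ₐ[ℚ] Matrix (Fin n) (Fin n) ℝ} {O : Subring A} {δ : ℝ} (hδ : 0 < δ)
    (hδ_le : 2 * δ ≤ 1) {x y : A} (hx : x ∈ OSet ι O z m δ) (hy : y ∈ OSet ι O z m δ) :
    (m : ℝ)⁻¹ * |(ι (x - y)).det| ≤ n.factorial * n * 3 ^ (n - 1) * (2 * δ) := by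
  obtain ⟨k, hk, hxk⟩ := exists_norm_normalizedConj_sub_lt_of_mem_OSet hδ hx
  obtain ⟨l, hl, hyl⟩ := exists_norm_normalizedConj_sub_lt_of_mem_OSet hδ hy
  have hclose : ‖normalizedConj z m (ι (x - y)) - (k - l)‖ ≤ 2 * δ := by
    rw [map_sub, normalizedConj_sub, sub_sub_sub_comm]
    linarith [norm_sub_le (normalizedConj z m (ι x) - k) (normalizedConj z m (ι y) - l)]
  have hdet := abs_det_le_of_norm_sub_le (by rwa [Fintype.card_fin]) hk hl hclose hδ_le
  rwa [Fintype.card_fin, det_normalizedConj hodd.pos.ne', abs_mul,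
    abs_of_nonneg (inv_nonneg.2 m.cast_nonneg)] at hdet

end NormalizedConjugation

theorem stmt15_general (n : ℕ) (hodd : Odd n) :
    ∃ c > 0, ∀ (A : Type*) [DivisionRing A] [CharZero A] [Algebra.IsCentral ℚ A]
      (ι : A →ₐ[ℚ] Matrix (Fin n) (Fin n) ℝ), Module.finrank ℚ A = n ^ 2 →
      ∀ O : Subring A, (∀ x ∈ O, IsIntegral ℤ x) →
      ∀ (z : Matrix.GeneralLinearGroup (Fin n) ℝ) (m : ℕ), 1 ≤ m →
      ∀ δ : ℝ, 0 < δ → δ ≤ c * (m : ℝ)⁻¹ → (OSet ι O z m δ).Subsingleton := by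
  have : NeZero n := ⟨hodd.pos.ne'⟩
  have hC_one : (1 : ℝ) ≤ n.factorial * n * 3 ^ (n - 1) := by
    exact_mod_cast Nat.mul_pos (Nat.mul_pos n.factorial_pos hodd.pos) (pow_pos three_pos _)
  set C : ℝ := n.factorial * n * 3 ^ (n - 1)
  refine ⟨(4 * C)⁻¹, by positivity, fun A _ _ _ ι hdim O hO z m hm δ hδ hδm x hx y hy ↦ ?_⟩
  have hm_inv : 0 < (m : ℝ)⁻¹ ∧ (m : ℝ)⁻¹ ≤ 1 :=
    ⟨by positivity, inv_le_one_of_one_le₀ (Nat.one_le_cast.2 hm)⟩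
  have hCδ : C * (2 * δ) ≤ (m : ℝ)⁻¹ / 2 := by
    calc C * (2 * δ) ≤ C * (2 * ((4 * C)⁻¹ * (m : ℝ)⁻¹)) := by gcongr
      _ = (m : ℝ)⁻¹ / 2 := by field_simp; norm_num
  have hupper : (m : ℝ)⁻¹ * |(ι (x - y)).det| ≤ C * (2 * δ) :=
    inv_mul_abs_det_map_sub_le_of_mem_OSet hodd hδ (by nlinarith) hx hy
  by_contra hne
  have hlower : 1 ≤ |(ι (x - y)).det| := one_le_abs_det_of_isIntegral
    (by rwa [Fintype.card_fin]) ι (hO _ (sub_mem hx.1 hy.1)) (sub_ne_zero.2 hne)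
  nlinarith

/-- For odd `n ≥ 3` and `ε > 0` there are `c, C > 0`, depending only on
`n, ε`, such that for every positive integer `m` and every `0 < δ ≤ c·m^(-2-ε)`, the set
`𝒪(m; z, δ)` is finite with `#𝒪(m; z, δ) ≤ C·m^ε`. -/
theorem stmt15 (n : ℕ) (hn : 3 ≤ n) (hodd : Odd n) (ε : ℝ) (hε : 0 < ε) :
    ∃ c C : ℝ, 0 < c ∧ 0 < C ∧
      ∀ (A : Type) [DivisionRing A] [CharZero A]
        (ι : A →ₐ[ℚ] Matrix (Fin n) (Fin n) ℝ),
        Function.Injective ι →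
        Subalgebra.center ℚ A = ⊥ →
        Module.finrank ℚ A = n ^ 2 →
        ∀ O : Subring A, IsOrder A O →
        ∀ z : Matrix.GeneralLinearGroup (Fin n) ℝ,
        ∀ m : ℕ, 1 ≤ m →
        ∀ δ : ℝ, 0 < δ → δ ≤ c * (m : ℝ) ^ (-2 - ε) →
        (OSet ι O z m δ).Finite ∧ ((OSet ι O z m δ).ncard : ℝ) ≤ C * (m : ℝ) ^ ε := by
  obtain ⟨c, hc, hsub⟩ := stmt15_general n hodd
  refine ⟨c, 1, hc, one_pos, fun A _ _ ι _ hcen hdim O hO z m hm δ hδ hδm ↦ ?_⟩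
  have : Algebra.IsCentral ℚ A := ⟨hcen.le⟩
  have hm1 : (1 : ℝ) ≤ m := Nat.one_le_cast.2 hm
  have hpow : (m : ℝ) ^ (-2 - ε) ≤ (m : ℝ)⁻¹ := by
    rw [← Real.rpow_neg_one]
    exact Real.rpow_le_rpow_of_exponent_le hm1 (by linarith)
  have hss := hsub A ι hdim O (fun _ ↦ hO.isIntegral) z m hm δ hδ (hδm.trans (by gcongr))
  have hcard : ((OSet ι O z m δ).ncard : ℝ) ≤ 1 := by
    exact_mod_cast (Set.ncard_le_one hss.finite).2 hss
  exact ⟨hss.finite, hcard.trans (by simpa using Real.one_le_rpow hm1 hε.le)⟩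
end

section
/- Let n ≥ 3 be an odd integer and ε > 0. There exist ρ₀ > 0 depending only on n and C > 0 depending only on n and ε such that: for every real-split central division ℚ-algebra A of degree n, every order 𝒪 ⊆ A, every maximal order 𝒪_max of A containing 𝒪 (maximal with respect to inclusion among orders of A), every z ∈ GL_n(ℝ), every ρ ∈ (0, ρ₀], and every positive integer m coprime to disc(𝒪_max), the set 𝒪(m; z, ρ) is finite with #𝒪(m; z, ρ) ≤ C·m^{n-1+ε}. -/
open Matrix

/-- `D` is the discriminant of the order `𝒪`. -/
def IsDisc {n : ℕ} {A : Type*} [DivisionRing A] [CharZero A]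
    (ι : A →ₐ[ℚ] Matrix (Fin n) (Fin n) ℝ) (O : Subring A) (D : ℕ) : Prop :=
  Ideal.span {d : ℤ | ∃ x : Fin (n ^ 2) → A, (∀ i, x i ∈ O) ∧
      (d : ℝ) = (Matrix.of fun i j => (ι (x i * x j)).trace).det} = Ideal.span {(D : ℤ)}

/-!
Write `Λ` for the maximal order. If `γ, γ' ∈ 𝒪(m; z, ρ)` generate the same right ideal of `Λ`, say
`γ' = γ u` with `u ∈ Λ`, then `nr(u - 1) = m⁻¹ nr(γ' - γ)` is the determinant of a difference of two
matrices close to `SO(n)`. For odd `n` the determinant of a difference of two elements of `SO(n)`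
vanishes, so by compactness `|nr(u - 1)| < 1` once `ρ` is small. But `nr(u - 1)ⁿ` is the determinant
of the left multiplication by `u - 1` on `Λ`, an integer, so `nr(u - 1) = 0`, and `u = 1` because
`A` is a division algebra. Hence `γ ↦ γ Λ` is injective on `𝒪(m; z, ρ)`.

Since `m` is coprime to the discriminant, `Λ / mⁿ Λ` is isomorphic to `Mₙ(ℤ/mⁿ)`: the two-sided
multiplications `x ↦ a x b` span `End(Λ)` modulo each prime `p ∣ m`, a finite field has trivial
Brauer group, and idempotents lift from `𝔽_p` to `ℤ/pᵏ`. As `mⁿ ∈ γ Λ`, the ideal `γ Λ` is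
determined by the lattice in `ℤⁿ` spanned by `mⁿ ℤⁿ` and the columns of the image of `γ`. This
lattice has index `m`, and there are at most `(d(m) m)ⁿ⁻¹ ≪ mⁿ⁻¹⁺ᵋ` sublattices of that index.
-/

/-! ### Counting subgroups of finite index -/

section SubgroupCount

variable {G G' : Type*} [AddCommGroup G] [AddCommGroup G']

theorem addSubgroup_int_eq_zmultiples_index (H : AddSubgroup ℤ) :
    H = AddSubgroup.zmultiples (H.index : ℤ) := by
  obtain ⟨a, rfl⟩ := Int.subgroup_cyclic H
  rw [← AddSubgroup.zmultiples_eq_closure, Int.index_zmultiples]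
  ext k
  rw [Int.mem_zmultiples_iff, Int.mem_zmultiples_iff, Int.natAbs_dvd]

theorem index_eq_index_map_fst_mul_index_comap_inr (H : AddSubgroup (ℤ × G)) :
    H.index = (H.map (AddMonoidHom.fst ℤ G)).index * (H.comap (AddMonoidHom.inr ℤ G)).index := by
  have exact_inr_fst : (AddMonoidHom.inr ℤ G).range = (AddMonoidHom.fst ℤ G).ker := by
    ext ⟨a, g⟩
    simp [AddSubgroup.mem_prod, eq_comm]
  have fst_range : (AddMonoidHom.fst ℤ G).range = ⊤ :=
    AddMonoidHom.range_eq_top.mpr Prod.fst_surjective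
  rw [AddSubgroup.index_comap, exact_inr_fst, AddSubgroup.index_map, fst_range,
    AddSubgroup.index_top, mul_one, ← AddSubgroup.relIndex_sup_left, mul_comm]
  exact (AddSubgroup.relIndex_mul_index le_sup_left).symm

theorem encard_biUnion_le_mul {α β : Type*} {t : Set α} {s : α → Set β} {c : ℕ∞}
    (h : ∀ i ∈ t, (s i).encard ≤ c) : (⋃ i ∈ t, s i).encard ≤ t.encard * c := by
  obtain rfl | hc := eq_or_ne c 0
  · simp only [nonpos_iff_eq_zero, Set.encard_eq_zero] at h
    simp [Set.iUnion₂_congr h]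
  obtain ht | ht := t.finite_or_infinite
  · calc (⋃ i ∈ t, s i).encard = (⋃ i ∈ ht.toFinset, s i).encard := by simp
      _ ≤ ∑ i ∈ ht.toFinset, (s i).encard := Finset.set_encard_biUnion_le _ _
      _ ≤ ht.toFinset.card • c := Finset.sum_le_card_nsmul _ _ _ (by simpa using h)
      _ = t.encard * c := by rw [nsmul_eq_mul, ht.encard_eq_coe_toFinset_card]
  · simp [ht.encard_eq, ENat.top_mul hc]

theorem encard_range_quotient_le {α : Type*} {K : AddSubgroup G} (hK : K.index ≠ 0)
    (f : G ⧸ K → α) : (Set.range f).encard ≤ K.index := by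
  have : Finite (G ⧸ K) := Nat.finite_of_card_ne_zero (AddSubgroup.index_eq_card K ▸ hK)
  calc (Set.range f).encard ≤ (Set.univ : Set (G ⧸ K)).encard := by
        rw [← Set.image_univ]; exact Set.encard_image_le _ _
    _ = K.index := by
        rw [Set.encard_univ, ENat.card_eq_coe_natCard, AddSubgroup.index_eq_card]

/-- The subgroup of `ℤ × G` generated by `(d, w)` and `0 × K`: a Hermite normal form. -/
def hermiteSubgroup (d : ℕ) (K : AddSubgroup G) (w : G) : AddSubgroup (ℤ × G) :=
  AddSubgroup.zmultiples ((d : ℤ), w) ⊔ K.map (AddMonoidHom.inr ℤ G)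

theorem hermiteSubgroup_le_of_sub_mem (d : ℕ) {K : AddSubgroup G} {w w' : G} (h : w - w' ∈ K) :
    hermiteSubgroup d K w ≤ hermiteSubgroup d K w' := by
  refine sup_le ?_ le_sup_right
  rw [AddSubgroup.zmultiples_le]
  have split : ((d : ℤ), w) = ((d : ℤ), w') + AddMonoidHom.inr ℤ G (w - w') := by simp
  rw [split]
  exact AddSubgroup.add_mem_sup (AddSubgroup.mem_zmultiples _)
    (AddSubgroup.mem_map_of_mem _ h)

theorem hermiteSubgroup_out (d : ℕ) (K : AddSubgroup G) (w : G) :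
    hermiteSubgroup d K (QuotientAddGroup.mk w : G ⧸ K).out = hermiteSubgroup d K w := by
  have hw : -w + (QuotientAddGroup.mk w : G ⧸ K).out ∈ K :=
    QuotientAddGroup.eq.mp (QuotientAddGroup.out_eq' _).symm
  rw [neg_add_eq_sub] at hw
  exact le_antisymm (hermiteSubgroup_le_of_sub_mem d hw)
    (hermiteSubgroup_le_of_sub_mem d (by simpa using K.neg_mem hw))

theorem exists_eq_hermiteSubgroup (H : AddSubgroup (ℤ × G)) :
    ∃ (d : ℕ) (w : G), H = hermiteSubgroup d (H.comap (AddMonoidHom.inr ℤ G)) w ∧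
      H.index = d * (H.comap (AddMonoidHom.inr ℤ G)).index := by
  obtain ⟨d, hd⟩ : ∃ d : ℕ, H.map (AddMonoidHom.fst ℤ G) = AddSubgroup.zmultiples (d : ℤ) :=
    ⟨_, addSubgroup_int_eq_zmultiples_index _⟩
  have d_mem : (d : ℤ) ∈ H.map (AddMonoidHom.fst ℤ G) := hd ▸ AddSubgroup.mem_zmultiples _
  obtain ⟨⟨a, w⟩, hw, rfl : a = d⟩ := d_mem
  refine ⟨d, w, le_antisymm ?_ (sup_le ?_ (AddSubgroup.map_comap_le _ _)), ?_⟩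
  · rintro ⟨a, g⟩ hag
    have a_mem : a ∈ H.map (AddMonoidHom.fst ℤ G) := AddSubgroup.mem_map_of_mem _ hag
    rw [hd, AddSubgroup.mem_zmultiples_iff] at a_mem
    obtain ⟨k, rfl⟩ := a_mem
    have split : (k • (d : ℤ), g) = k • ((d : ℤ), w) + AddMonoidHom.inr ℤ G (g - k • w) := by
      simp
    rw [split] at hag ⊢
    refine AddSubgroup.add_mem_sup (zsmul_mem (AddSubgroup.mem_zmultiples _) k)
      (AddSubgroup.mem_map_of_mem _ ?_)
    exact (add_mem_cancel_left (H.zsmul_mem hw k)).mp hag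
  · simpa using hw
  · rw [index_eq_index_map_fst_mul_index_comap_inr, hd, Int.index_zmultiples, Int.natAbs_natCast]

theorem encard_setOf_index_eq_prod_le {m : ℕ} (hm : m ≠ 0) {B : ℕ∞}
    (hB : ∀ k, k ∣ m → {K : AddSubgroup G | K.index = k}.encard ≤ B) :
    {H : AddSubgroup (ℤ × G) | H.index = m}.encard ≤ m.divisors.card * (B * m) := by
  have cover : {H : AddSubgroup (ℤ × G) | H.index = m} ⊆
      ⋃ d ∈ m.divisors, ⋃ K ∈ {K : AddSubgroup G | K.index = m / d},
        Set.range fun c : G ⧸ K => hermiteSubgroup d K c.out := by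
    intro H hH
    obtain ⟨d, w, hHw, hindex⟩ := exists_eq_hermiteSubgroup H
    rw [Set.mem_ofPred_eq.mp hH] at hindex
    have d_pos : 0 < d := Nat.pos_of_ne_zero (by rintro rfl; simp [hm] at hindex)
    simp only [Set.mem_iUnion]
    refine ⟨d, Nat.mem_divisors.mpr ⟨⟨_, hindex⟩, hm⟩, H.comap (AddMonoidHom.inr ℤ G), ?_,
      QuotientAddGroup.mk w, ?_⟩
    · rw [Set.mem_ofPred_eq, hindex, Nat.mul_div_cancel_left _ d_pos]
    · simp only [hermiteSubgroup_out, ← hHw]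
  have fibre : ∀ d ∈ m.divisors, (⋃ K ∈ {K : AddSubgroup G | K.index = m / d},
      Set.range fun c : G ⧸ K => hermiteSubgroup d K c.out).encard ≤ B * m := by
    intro d hd
    have d_dvd : d ∣ m := Nat.dvd_of_mem_divisors hd
    have quotient_pos : 0 < m / d := Nat.div_pos (Nat.le_of_dvd (Nat.pos_of_ne_zero hm) d_dvd)
      (Nat.pos_of_mem_divisors hd)
    have range_le : ∀ K ∈ {K : AddSubgroup G | K.index = m / d},
        (Set.range fun c : G ⧸ K => hermiteSubgroup d K c.out).encard ≤ m := by
      intro K hK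
      rw [Set.mem_ofPred_eq] at hK
      refine (encard_range_quotient_le (hK ▸ quotient_pos.ne') _).trans ?_
      rw [hK]
      exact_mod_cast Nat.div_le_self m d
    refine (encard_biUnion_le_mul range_le).trans ?_
    gcongr
    exact hB _ (Nat.div_dvd_of_dvd d_dvd)
  calc _ ≤ _ := Set.encard_le_encard cover
    _ ≤ ∑ d ∈ m.divisors, _ := Finset.set_encard_biUnion_le _ _
    _ ≤ ∑ _d ∈ m.divisors, (B * m : ℕ∞) := Finset.sum_le_sum fibre
    _ = _ := by rw [Finset.sum_const, nsmul_eq_mul]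

theorem encard_setOf_index_eq_congr (e : G ≃+ G') (m : ℕ) :
    {H : AddSubgroup G | H.index = m}.encard = {H : AddSubgroup G' | H.index = m}.encard := by
  refine Set.encard_congr (e.mapAddSubgroup.toEquiv.subtypeEquiv fun H => ?_)
  simp [AddSubgroup.index_map_equiv]

theorem encard_setOf_index_eq_int_le (m : ℕ) :
    {H : AddSubgroup ℤ | H.index = m}.encard ≤ 1 := by
  rw [Set.encard_le_one_iff]
  intro H H' hH hH'
  rw [addSubgroup_int_eq_zmultiples_index H, addSubgroup_int_eq_zmultiples_index H',
    Set.mem_ofPred_eq.mp hH, Set.mem_ofPred_eq.mp hH']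

theorem encard_setOf_index_eq_pi_int_le (n : ℕ) {m : ℕ} (hm : m ≠ 0) :
    {H : AddSubgroup (Fin (n + 1) → ℤ) | H.index = m}.encard ≤ (m.divisors.card * m) ^ n := by
  induction n generalizing m with
  | zero =>
    rw [encard_setOf_index_eq_congr (LinearEquiv.funUnique (Fin 1) ℤ ℤ).toAddEquiv, pow_zero]
    exact encard_setOf_index_eq_int_le m
  | succ n ih =>
    have smaller_index : ∀ k, k ∣ m → {K : AddSubgroup (Fin (n + 1) → ℤ) | K.index = k}.encard ≤
        (m.divisors.card * m) ^ n := by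
      intro k hk
      refine (ih (ne_zero_of_dvd_ne_zero hm hk)).trans ?_
      have k_le : k ≤ m := Nat.le_of_dvd (Nat.pos_of_ne_zero hm) hk
      gcongr
    rw [← encard_setOf_index_eq_congr
      (Fin.consLinearEquiv ℤ fun _ : Fin (n + 2) => ℤ).toAddEquiv]
    refine (encard_setOf_index_eq_prod_le hm smaller_index).trans_eq ?_
    ring

end SubgroupCount

/-! ### The divisor bound -/

section DivisorBound

theorem natCast_add_one_le_mul_pow_rpow {ε : ℝ} (hε : 0 < ε) {p : ℕ} (hp : 2 ≤ p) (k : ℕ) :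
    (k + 1 : ℝ) ≤ (1 + 1 / (ε * Real.log 2)) * ((p : ℝ) ^ k) ^ ε := by
  set a := ε * Real.log 2 with ha
  have a_pos : 0 < a := mul_pos hε (Real.log_pos (by norm_num))
  have linear_le : k * a + 1 ≤ ((p : ℝ) ^ k) ^ ε := by
    calc k * a + 1 ≤ Real.exp (k * a) := Real.add_one_le_exp _
      _ = ((2 : ℝ) ^ k) ^ ε := by
        rw [Real.rpow_def_of_pos (by positivity), Real.log_pow, ha]; ring_nf
      _ ≤ ((p : ℝ) ^ k) ^ ε := by gcongr; exact_mod_cast hp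
  calc (k + 1 : ℝ) ≤ k + 1 + (k * a + 1 / a) := le_add_of_nonneg_right (by positivity)
    _ = (1 + 1 / a) * (k * a + 1) := by field_simp; ring
    _ ≤ (1 + 1 / a) * ((p : ℝ) ^ k) ^ ε := by gcongr

theorem natCast_add_one_le_pow_rpow {ε : ℝ} (hε : 0 < ε) {x : ℝ} (hx : 2 ^ (1 / ε) ≤ x) (k : ℕ) :
    (k + 1 : ℝ) ≤ (x ^ k) ^ ε := by
  have x_nonneg : 0 ≤ x := (Real.rpow_nonneg zero_le_two _).trans hx
  have two_le : 2 ≤ x ^ ε := by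
    calc (2 : ℝ) = (2 ^ (1 / ε)) ^ ε := by
          rw [← Real.rpow_mul zero_le_two, one_div_mul_cancel hε.ne', Real.rpow_one]
      _ ≤ x ^ ε := by gcongr
  calc (k + 1 : ℝ) ≤ 2 ^ k := by exact_mod_cast Nat.lt_two_pow_self (n := k)
    _ ≤ (x ^ ε) ^ k := by gcongr
    _ = (x ^ k) ^ ε := (Real.rpow_pow_comm x_nonneg ε k)

theorem natCast_rpow_eq_prod_primeFactors {m : ℕ} (hm : m ≠ 0) (ε : ℝ) :
    (m : ℝ) ^ ε = ∏ p ∈ m.primeFactors, ((p : ℝ) ^ m.factorization p) ^ ε := by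
  rw [Real.finsetProd_rpow _ _ fun p _ => by positivity]
  conv_lhs => rw [← Nat.prod_factorization_pow_eq_self hm, Finsupp.prod]
  push_cast
  rfl

theorem exists_card_divisors_le_mul_rpow {ε : ℝ} (hε : 0 < ε) :
    ∃ C : ℝ, 0 < C ∧ ∀ m : ℕ, m ≠ 0 → (m.divisors.card : ℝ) ≤ C * (m : ℝ) ^ ε := by
  set K : ℝ := 1 + 1 / (ε * Real.log 2)
  have one_le_K : 1 ≤ K := le_add_of_nonneg_right (by positivity)
  obtain ⟨Q, hQ⟩ := exists_nat_ge ((2 : ℝ) ^ (1 / ε))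
  refine ⟨K ^ Q, by positivity, fun m hm => ?_⟩
  have small_primes : (m.primeFactors.filter (· < Q)).card ≤ Q :=
    calc _ ≤ (Finset.range Q).card := Finset.card_le_card fun p hp =>
          Finset.mem_range.mpr (Finset.mem_filter.mp hp).2
      _ = Q := Finset.card_range Q
  calc (m.divisors.card : ℝ) = ∏ p ∈ m.primeFactors, (m.factorization p + 1 : ℝ) := by
        rw [Nat.card_divisors hm]; push_cast; rfl
    _ ≤ ∏ p ∈ m.primeFactors, ((if p < Q then K else 1) * ((p : ℝ) ^ m.factorization p) ^ ε) := by
        refine Finset.prod_le_prod (fun p _ => by positivity) fun p hp => ?_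
        split_ifs with hpQ
        · exact natCast_add_one_le_mul_pow_rpow hε (Nat.prime_of_mem_primeFactors hp).two_le _
        · rw [one_mul]
          exact natCast_add_one_le_pow_rpow hε (hQ.trans (by exact_mod_cast not_lt.mp hpQ)) _
    _ = K ^ (m.primeFactors.filter (· < Q)).card * (m : ℝ) ^ ε := by
        rw [Finset.prod_mul_distrib, ← natCast_rpow_eq_prod_primeFactors hm, Finset.prod_ite,
          Finset.prod_const, Finset.prod_const_one, mul_one]
    _ ≤ K ^ Q * (m : ℝ) ^ ε := by gcongr

theorem exists_card_divisors_mul_self_pow_le_mul_rpow (k : ℕ) {ε : ℝ} (hε : 0 < ε) :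
    ∃ C : ℝ, 0 < C ∧
      ∀ m : ℕ, m ≠ 0 → ((m.divisors.card * m : ℕ) : ℝ) ^ k ≤ C * (m : ℝ) ^ (k + ε) := by
  obtain ⟨C, hC, hdiv⟩ := exists_card_divisors_le_mul_rpow (ε := ε / (k + 1)) (by positivity)
  refine ⟨C ^ k, by positivity, fun m hm => ?_⟩
  have one_le_m : (1 : ℝ) ≤ m := by exact_mod_cast Nat.one_le_iff_ne_zero.mpr hm
  have exponent_le : ε / (k + 1) * k ≤ ε := by
    rw [div_mul_eq_mul_div, div_le_iff₀ (by positivity)]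
    nlinarith
  calc ((m.divisors.card * m : ℕ) : ℝ) ^ k ≤ (C * (m : ℝ) ^ (ε / (k + 1)) * m) ^ k := by
        push_cast
        gcongr
        exact hdiv m hm
    _ = C ^ k * (m : ℝ) ^ (k + ε / (k + 1) * k) := by
        rw [mul_pow, mul_pow, Real.rpow_add (by positivity), Real.rpow_mul (by positivity),
          Real.rpow_natCast, Real.rpow_natCast]
        ring
    _ ≤ C ^ k * (m : ℝ) ^ (k + ε) := by gcongr

end DivisorBound

/-! ### Perturbations of rotations in odd dimension -/

section SpecialOrthogonal

variable {n : ℕ}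

theorem det_sub_eq_zero_of_isSO (hn : Odd n) {k k' : Matrix (Fin n) (Fin n) ℝ}
    (hk : IsSO k) (hk' : IsSO k') : (k' - k).det = 0 := by
  have k'_mul_transpose : k' * k'ᵀ = 1 := mul_eq_one_comm.mp hk'.1
  have conj_eq : kᵀ * (k' - k) * k'ᵀ = -(k' - k)ᵀ := by
    rw [mul_sub, sub_mul, hk.1, mul_assoc, k'_mul_transpose, mul_one, one_mul, transpose_sub,
      neg_sub]
  have det_eq_neg := congrArg det conj_eq
  rw [det_mul, det_mul, det_neg, det_transpose, det_transpose, det_transpose, hk.2, hk'.2,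
    Fintype.card_fin, hn.neg_one_pow] at det_eq_neg
  linarith

open scoped Matrix.Norms.Elementwise in
theorem isCompact_setOf_isSO : IsCompact {k : Matrix (Fin n) (Fin n) ℝ | IsSO k} := by
  refine Metric.isCompact_of_isClosed_isBounded ?_ ?_
  · exact (isClosed_eq (by fun_prop) continuous_const).inter
      (isClosed_eq continuous_id.matrix_det continuous_const)
  · refine (Metric.isBounded_closedBall (x := 0) (r := 1)).subset fun k hk => ?_
    rw [mem_closedBall_zero_iff]
    refine entrywise_sup_norm_bound_of_unitary ?_
    rw [mem_unitaryGroup_iff']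
    simpa [star_eq_conjTranspose] using hk.1

open scoped Matrix.Norms.Elementwise in
theorem exists_abs_det_sub_lt_one_of_near_isSO (hn : Odd n) : ∃ ρ₀ : ℝ, 0 < ρ₀ ∧
    ∀ X X' k k' : Matrix (Fin n) (Fin n) ℝ, IsSO k → IsSO k' →
      (∀ i j, |(X - k) i j| < ρ₀) → (∀ i j, |(X' - k') i j| < ρ₀) → |(X' - X).det| < 1 := by
  set SO : Set (Matrix (Fin n) (Fin n) ℝ) := {k | IsSO k}
  set U : Set (Matrix (Fin n) (Fin n) ℝ × Matrix (Fin n) (Fin n) ℝ) :=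
    {P | |(P.2 - P.1).det| < 1} with hU
  have isOpen_U : IsOpen U :=
    isOpen_lt (continuous_snd.sub continuous_fst).matrix_det.abs continuous_const
  have SO_subset : SO ×ˢ SO ⊆ U := fun P hP => by
    simp [hU, det_sub_eq_zero_of_isSO hn hP.1 hP.2]
  obtain ⟨ρ₀, hρ₀, thickening_subset⟩ :=
    (isCompact_setOf_isSO.prod isCompact_setOf_isSO).exists_thickening_subset_open
      isOpen_U SO_subset
  refine ⟨ρ₀, hρ₀, fun X X' k k' hk hk' hX hX' => thickening_subset (a := (X, X')) ?_⟩
  refine Metric.mem_thickening_iff.mpr ⟨(k, k'), ⟨hk, hk'⟩, ?_⟩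
  rw [Prod.dist_eq, max_lt_iff, dist_eq_norm, dist_eq_norm, norm_lt_iff hρ₀, norm_lt_iff hρ₀]
  exact ⟨hX, hX'⟩

end SpecialOrthogonal

/-! ### Algebras generated by two-sided multiplications -/

section TwoSidedMultiplication

open TensorProduct MulOpposite

theorem exists_mulLeftRight_apply_eq_sum {R S : Type*} [CommRing R] [Ring S] [Algebra R S]
    (w : S ⊗[R] Sᵐᵒᵖ) :
    ∃ s : Finset (S × Sᵐᵒᵖ), ∀ x, AlgHom.mulLeftRight R S w x = ∑ q ∈ s, q.1 * x * q.2.unop := by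
  obtain ⟨s, rfl⟩ := TensorProduct.exists_finset w
  exact ⟨s, fun x => by simp [LinearMap.sum_apply]⟩

theorem exists_sum_mul_mul_eq_one {R S : Type*} [CommRing R] [Ring S] [Algebra R S]
    (h : Function.Surjective (AlgHom.mulLeftRight R S)) {x : S} {φ : S →ₗ[R] R} (hφ : φ x = 1) :
    ∃ s : Finset (S × Sᵐᵒᵖ), ∑ q ∈ s, q.1 * x * q.2.unop = 1 := by
  obtain ⟨w, hw⟩ := h (φ.smulRight 1)
  obtain ⟨s, hs⟩ := exists_mulLeftRight_apply_eq_sum w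
  exact ⟨s, by rw [← hs, hw, LinearMap.smulRight_apply, hφ, one_smul]⟩

section Transfer

variable {R R' S S' : Type*} [CommRing R] [CommRing R'] [Ring S] [Ring S'] [Algebra R S]
  [Algebra R' S'] [Algebra R S']

theorem surjective_mulLeftRight_of_surjective [Algebra R R'] [IsScalarTower R R' S']
    [Module.Projective R S] (j : S →ₐ[R] S') (hj : Function.Surjective j) {t : R}
    (ht : IsUnit (algebraMap R R' t))
    (h : ∀ F : Module.End R S, t • F ∈ (AlgHom.mulLeftRight R S).range) :
    Function.Surjective (AlgHom.mulLeftRight R' S') := by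
  intro F
  obtain ⟨G, hG⟩ := Module.projective_lifting_property j.toLinearMap
    (F.restrictScalars R ∘ₗ j.toLinearMap) hj
  obtain ⟨w, hw⟩ := h G
  obtain ⟨s, hs⟩ := exists_mulLeftRight_apply_eq_sum w
  obtain ⟨u, hu⟩ := ht
  refine ⟨(↑u⁻¹ : R') • ∑ q ∈ s, j q.1 ⊗ₜ op (j q.2.unop), LinearMap.ext fun y => ?_⟩
  obtain ⟨x, rfl⟩ := hj y
  have F_apply : F (j x) = j (G x) := (LinearMap.congr_fun hG x).symm
  have sum_apply : ∑ q ∈ s, j q.1 * j x * j q.2.unop = (u : R') • F (j x) := by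
    calc _ = j (t • G x) := by
          simp only [← LinearMap.smul_apply, ← hw, AlgHom.toRingHom_eq_coe, RingHom.coe_coe, hs,
            map_sum, map_mul]
      _ = (u : R') • F (j x) := by rw [map_smul, F_apply, hu, algebraMap_smul]
  simp [LinearMap.sum_apply, sum_apply, smul_smul]

theorem linearIndependent_algHom_comp_basis {I : Type*} [FaithfulSMul R' S']
    (h : Function.Surjective (AlgHom.mulLeftRight R S)) (b : Module.Basis I R S)
    (j : S →ₐ[R] S') : LinearIndependent R' (j ∘ b) := by
  classical
  rw [linearIndependent_iff']
  intro s r hr i hi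
  obtain ⟨w, hw⟩ := h ((b.coord i).smulRight 1)
  obtain ⟨u, hu⟩ := exists_mulLeftRight_apply_eq_sum w
  have coord_eq : ∀ k, ∑ q ∈ u, j q.1 * j (b k) * j q.2.unop = if k = i then 1 else 0 := by
    intro k
    simp only [← map_mul, ← map_sum, ← hu, hw]
    simp [Finsupp.single_apply, apply_ite j]
  have combination_eq : r i • (1 : S') = 0 := by
    calc r i • (1 : S') = ∑ k ∈ s, r k • ∑ q ∈ u, j q.1 * j (b k) * j q.2.unop := by
          simp [coord_eq, hi]
      _ = ∑ q ∈ u, j q.1 * (∑ k ∈ s, r k • (j ∘ b) k) * j q.2.unop := by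
          simp only [Finset.smul_sum, Finset.mul_sum, Finset.sum_mul, Function.comp_apply,
            mul_smul_comm, smul_mul_assoc]
          exact Finset.sum_comm
      _ = 0 := by simp only [hr, mul_zero, zero_mul, Finset.sum_const_zero]
  rwa [← Algebra.algebraMap_eq_smul_one, FaithfulSMul.algebraMap_eq_zero_iff] at combination_eq

end Transfer

section DivisionAlgebra

variable {K A : Type*} [Field K] [DivisionRing A] [Algebra K A]

attribute [local instance] instModuleTensorProductMop

theorem tensorProduct_op_smul (w : A ⊗[K] Aᵐᵒᵖ) (x : A) : w • x = AlgHom.mulLeftRight K A w x :=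
  rfl

theorem isSimpleModule_tensorProduct_op : IsSimpleModule (A ⊗[K] Aᵐᵒᵖ) A := by
  refine isSimpleModule_iff_toSpanSingleton_surjective.mpr ⟨inferInstance, fun x hx y => ?_⟩
  exact ⟨(y * x⁻¹) ⊗ₜ 1, by simp [tensorProduct_op_smul, hx]⟩

theorem exists_eq_smul_of_linear_tensorProduct_op (hA : Subalgebra.center K A = ⊥)
    (g : Module.End (A ⊗[K] Aᵐᵒᵖ) A) : ∃ c : K, ∀ x, g x = c • x := by
  have g_mul : ∀ a x b : A, g (a * x * b) = a * g x * b := by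
    intro a x b
    simpa [tensorProduct_op_smul] using g.map_smul (a ⊗ₜ[K] op b) x
  have g_one_mem : g 1 ∈ Subalgebra.center K A := by
    rw [Subalgebra.mem_center_iff]
    intro x
    have left := g_mul x 1 1
    have right := g_mul 1 1 x
    simp only [mul_one, one_mul] at left right
    rw [← left, right]
  rw [hA, Algebra.mem_bot] at g_one_mem
  obtain ⟨c, hc⟩ := g_one_mem
  refine ⟨c, fun x => ?_⟩
  have g_eq := g_mul 1 1 x
  simp only [one_mul] at g_eq
  rw [g_eq, ← hc, Algebra.smul_def]

theorem surjective_mulLeftRight_of_center_eq_bot [Module.Finite K A]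
    (hA : Subalgebra.center K A = ⊥) : Function.Surjective (AlgHom.mulLeftRight K A) := by
  classical
  intro F
  have : IsSimpleModule (A ⊗[K] Aᵐᵒᵖ) A := isSimpleModule_tensorProduct_op
  let F' : Module.End (Module.End (A ⊗[K] Aᵐᵒᵖ) A) A :=
    { F with
      map_smul' := fun g x => by
        obtain ⟨c, hc⟩ := exists_eq_smul_of_linear_tensorProduct_op hA g
        simp [hc] }
  let b := Module.finBasis K A
  obtain ⟨w, hw⟩ := jacobson_density F' (Finset.univ.image b)
  exact ⟨w, b.ext fun i => (hw (b i) (by simp)).symm⟩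

end DivisionAlgebra

section Field

variable {κ B : Type*} [Field κ] [Ring B] [Algebra κ B] [Nontrivial B]

theorem isSimpleRing_of_surjective_mulLeftRight
    (h : Function.Surjective (AlgHom.mulLeftRight κ B)) : IsSimpleRing B := by
  refine IsSimpleRing.of_eq_bot_or_eq_top fun J => or_iff_not_imp_left.mpr fun hJ => ?_
  obtain ⟨x, hxJ, hx⟩ : ∃ x ∈ J, x ≠ 0 := by
    contrapose! hJ
    exact eq_bot_iff.mpr fun x hx => (TwoSidedIdeal.mem_bot _).mpr (hJ x hx)
  obtain ⟨φ, hφ⟩ := Module.Projective.exists_dual_eq_one κ hx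
  obtain ⟨s, hs⟩ := exists_sum_mul_mul_eq_one h hφ
  refine J.one_mem_iff.mp ?_
  rw [← hs]
  exact sum_mem fun q _ => J.mul_mem_right _ _ (J.mul_mem_left _ _ hxJ)

theorem center_eq_bot_of_surjective_mulLeftRight
    (h : Function.Surjective (AlgHom.mulLeftRight κ B)) : Subalgebra.center κ B = ⊥ := by
  refine eq_bot_iff.mpr fun c hc => ?_
  rw [Subalgebra.mem_center_iff] at hc
  obtain ⟨φ, hφ⟩ := Module.Projective.exists_dual_eq_one κ (one_ne_zero (α := B))
  obtain ⟨w, hw⟩ := h (φ.smulRight 1)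
  obtain ⟨s, hs⟩ := exists_mulLeftRight_apply_eq_sum w
  refine Algebra.mem_bot.mpr ⟨φ c, ?_⟩
  calc algebraMap κ B (φ c) = ∑ q ∈ s, q.1 * c * q.2.unop := by
        rw [← hs, hw, LinearMap.smulRight_apply, Algebra.algebraMap_eq_smul_one]
    _ = c * ∑ q ∈ s, q.1 * 1 * q.2.unop := by
        simp only [hc, mul_one, Finset.mul_sum, mul_assoc]
    _ = c := by rw [← hs, hw, LinearMap.smulRight_apply, hφ, one_smul, mul_one]

theorem exists_algEquiv_matrix_of_surjective_mulLeftRight [Finite κ] [Module.Finite κ B]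
    (h : Function.Surjective (AlgHom.mulLeftRight κ B)) :
    ∃ r : ℕ, NeZero r ∧ Nonempty (B ≃ₐ[κ] Matrix (Fin r) (Fin r) κ) := by
  have := isSimpleRing_of_surjective_mulLeftRight h
  have : IsArtinianRing B := IsArtinianRing.of_finite κ B
  obtain ⟨r, hr, D, _, _, _, ⟨E⟩⟩ := IsSimpleRing.exists_algEquiv_matrix_divisionRing_finite κ B
  have : Finite D := Module.finite_of_finite κ
  have algebraMap_surjective : Function.Surjective (algebraMap κ D) := by
    intro d
    have scalar_mem : E.symm (scalar (Fin r) d) ∈ Subalgebra.center κ B := by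
      rw [Subalgebra.mem_center_iff]
      intro x
      apply E.injective
      rw [map_mul, map_mul, E.apply_symm_apply]
      exact (scalar_commute d (fun y => (littleWedderburn D).mul_comm d y) (E x)).symm
    rw [center_eq_bot_of_surjective_mulLeftRight h, Algebra.mem_bot] at scalar_mem
    obtain ⟨c, hc⟩ := scalar_mem
    refine ⟨c, ?_⟩
    have E_eq : algebraMap κ (Matrix (Fin r) (Fin r) D) c = scalar (Fin r) d := by
      rw [← E.commutes, hc, E.apply_symm_apply]
    simpa [algebraMap_matrix_apply] using congrFun (congrFun E_eq 0) 0
  let e : κ ≃ₐ[κ] D := AlgEquiv.ofBijective (Algebra.ofId κ D)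
    ⟨(algebraMap κ D).injective, algebraMap_surjective⟩
  exact ⟨r, hr, ⟨E.trans e.symm.mapMatrix⟩⟩

end Field

end TwoSidedMultiplication

/-! ### Splitting over local rings -/

section Splitting

variable {R S : Type*} [CommRing R] [Ring S] [Algebra R S]

theorem mul_mem_mul_smul_top {I J : Ideal R} {x y : S} (hx : x ∈ I • (⊤ : Submodule R S))
    (hy : y ∈ J • (⊤ : Submodule R S)) : x * y ∈ (I * J) • (⊤ : Submodule R S) := by
  refine Submodule.smul_induction_on hx (fun c hc v _ => ?_) fun v v' hv hv' => ?_
  · refine Submodule.smul_induction_on hy (fun d hd w _ => ?_) fun w w' hw hw' => ?_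
    · rw [smul_mul_smul_comm]
      exact Submodule.smul_mem_smul (Ideal.mul_mem_mul hc hd) trivial
    · rw [mul_add]
      exact add_mem hw hw'
  · rw [add_mul]
    exact add_mem hv hv'

theorem pow_mem_pow_smul_top {I : Ideal R} {x : S} (hx : x ∈ I • (⊤ : Submodule R S)) (k : ℕ) :
    x ^ k ∈ I ^ k • (⊤ : Submodule R S) := by
  induction k with
  | zero => simp
  | succ k ih =>
    rw [pow_succ, pow_succ]
    exact mul_mem_mul_smul_top ih hx

section Idempotent

variable {e : S}

theorem mul_idempotent_of_mem_span (he : IsIdempotentElem e) {x : S}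
    (hx : x ∈ Ideal.span {e}) : x * e = x := by
  obtain ⟨y, rfl⟩ := Ideal.mem_span_singleton'.mp hx
  rw [mul_assoc, he.eq]

theorem bijective_lsmul_span_idempotent (he : IsIdempotentElem e)
    (corner : ∀ x, ∃ c : R, e * x * e = c • e) {s : Finset (S × Sᵐᵒᵖ)}
    (full : ∑ q ∈ s, q.1 * e * q.2.unop = 1) :
    Function.Bijective (Algebra.lsmul R R (Ideal.span {e}) : S →ₐ[R] _) := by
  have mem_span (x : S) : x * e ∈ Ideal.span {e} := Ideal.mem_span_singleton'.mpr ⟨x, rfl⟩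
  constructor
  · refine (injective_iff_map_eq_zero _).mpr fun a ha => ?_
    have kills (x : S) : a * (x * e) = 0 :=
      congrArg Subtype.val (LinearMap.congr_fun ha ⟨x * e, mem_span x⟩)
    rw [← mul_one a, ← full, Finset.mul_sum]
    exact Finset.sum_eq_zero fun q _ => by rw [← mul_assoc, kills, zero_mul]
  · intro g
    refine ⟨∑ q ∈ s, (g ⟨q.1 * e, mem_span _⟩ : S) * q.2.unop, LinearMap.ext fun y => ?_⟩
    choose c hc using fun q : S × Sᵐᵒᵖ => corner (q.2.unop * y)
    have y_mul : (y : S) * e = y := mul_idempotent_of_mem_span he y.2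
    have corner_y (q : S × Sᵐᵒᵖ) : e * q.2.unop * y = c q • e := by
      rw [← hc q, ← y_mul, mul_assoc, mul_assoc, mul_assoc, mul_assoc, he.eq]
    have y_eq : y = ∑ q ∈ s, c q • (⟨q.1 * e, mem_span _⟩ : Ideal.span {e}) := by
      apply Subtype.ext
      calc (y : S) = (∑ q ∈ s, q.1 * e * q.2.unop) * y := by rw [full, one_mul]
        _ = ∑ q ∈ s, c q • (q.1 * e) := by
          simp only [Finset.sum_mul, mul_assoc, ← mul_smul_comm, ← corner_y]
        _ = _ := by simp
    have g_mul (q : S × Sᵐᵒᵖ) (x : Ideal.span {e}) :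
        (x : S) * q.2.unop * y = c q • (x : S) := by
      rw [← mul_idempotent_of_mem_span he x.2, mul_assoc, mul_assoc, ← mul_assoc e, corner_y,
        mul_smul_comm]
    apply Subtype.ext
    conv_rhs => rw [y_eq, map_sum]
    simp only [map_smul, Algebra.lsmul_coe, Submodule.coe_smul, smul_eq_mul, Finset.sum_mul, g_mul,
      Submodule.coe_sum]
    rfl

variable (R e) in
/-- Right multiplication by `e`, as a map onto the left ideal `S e`; it is a retraction when `e` is
idempotent. -/
def mulRightToSpan : S →ₗ[R] Ideal.span {e} where
  toFun x := ⟨x * e, Ideal.mem_span_singleton'.mpr ⟨x, rfl⟩⟩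
  map_add' x y := Subtype.ext (add_mul x y e)
  map_smul' c x := Subtype.ext (smul_mul_assoc c x e)

theorem mulRightToSpan_comp_subtype (he : IsIdempotentElem e) :
    mulRightToSpan R e ∘ₗ (Ideal.span {e}).subtype.restrictScalars R = LinearMap.id :=
  LinearMap.ext fun x => Subtype.ext (mul_idempotent_of_mem_span he x.2)

theorem nonempty_algEquiv_matrix_of_idempotent [IsLocalRing R] [Module.Free R S]
    [Module.Finite R S] (he : IsIdempotentElem e) (corner : ∀ x, ∃ c : R, e * x * e = c • e)
    {s : Finset (S × Sᵐᵒᵖ)} (full : ∑ q ∈ s, q.1 * e * q.2.unop = 1) {n : ℕ}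
    (hn : Module.finrank R S = n ^ 2) : Nonempty (S ≃ₐ[R] Matrix (Fin n) (Fin n) R) := by
  have retraction := mulRightToSpan_comp_subtype (R := R) he
  have : Module.Projective R (Ideal.span {e}) :=
    Module.Projective.of_split _ (mulRightToSpan R e) retraction
  have : Module.Finite R (Ideal.span {e}) :=
    Module.Finite.of_surjective (mulRightToSpan R e)
      (LinearMap.surjective_of_comp_eq_id _ _ retraction)
  have : Module.Free R (Ideal.span {e}) := Module.free_of_flat_of_isLocalRing
  let splitting : S ≃ₐ[R] Matrix _ _ R :=
    (AlgEquiv.ofBijective _ (bijective_lsmul_span_idempotent he corner full)).trans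
      (algEquivMatrix (Module.finBasis R (Ideal.span {e})))
  have rank_eq : Module.finrank R (Ideal.span {e}) = n := by
    have := splitting.toLinearEquiv.finrank_eq
    rw [hn, Module.finrank_matrix, Module.finrank_self, mul_one, Fintype.card_fin, ← sq] at this
    exact (Nat.pow_left_injective two_ne_zero this).symm
  exact ⟨splitting.trans (reindexAlgEquiv R R (finCongr rank_eq))⟩

end Idempotent

theorem exists_rankOne_idempotent {κ B : Type*} [Field κ] [Finite κ] [Ring B] [Nontrivial B]
    [Algebra κ B] [Module.Finite κ B] (h : Function.Surjective (AlgHom.mulLeftRight κ B)) :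
    ∃ e : B, IsIdempotentElem e ∧ e ≠ 0 ∧ ∀ x, ∃ c : κ, e * x * e = c • e := by
  obtain ⟨r, _, ⟨E⟩⟩ := exists_algEquiv_matrix_of_surjective_mulLeftRight h
  refine ⟨E.symm (single 0 0 1), ?_, ?_, fun x => ⟨E x 0 0, E.injective ?_⟩⟩
  · rw [IsIdempotentElem, ← map_mul, single_mul_single_same, mul_one]
  · rw [ne_eq, map_eq_zero_iff _ E.symm.injective]
    exact fun hzero => one_ne_zero (α := κ) (by simpa using congrFun (congrFun hzero 0) 0)
  · rw [map_mul, map_mul, map_smul, E.apply_symm_apply, single_mul_mul_single, smul_single]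
    simp

section LocalRing

open IsLocalRing TensorProduct

variable [IsLocalRing R]

variable (R S) in
/-- The reduction of `S` modulo the maximal ideal of `R`. -/
noncomputable abbrev residueMap : S →ₐ[R] ResidueField R ⊗[R] S :=
  Algebra.TensorProduct.includeRight

theorem residueMap_surjective : Function.Surjective (residueMap R S) :=
  Algebra.TensorProduct.includeRight_surjective S residue_surjective

theorem residueMap_eq_zero_iff {x : S} :
    residueMap R S x = 0 ↔ x ∈ maximalIdeal R • (⊤ : Submodule R S) := by
  rw [← LinearMap.ker_tensorProductMk]
  rfl

theorem isNilpotent_of_residueMap_eq_zero [IsArtinianRing R] {x : S}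
    (hx : residueMap R S x = 0) : IsNilpotent x := by
  obtain ⟨k, hk⟩ := IsArtinianRing.isNilpotent_jacobson_bot (R := R)
  rw [jacobson_eq_maximalIdeal ⊥ bot_ne_top] at hk
  have x_pow_mem := pow_mem_pow_smul_top (residueMap_eq_zero_iff.mp hx) k
  rw [hk, Ideal.zero_eq_bot, Submodule.bot_smul, Submodule.mem_bot] at x_pow_mem
  exact ⟨k, x_pow_mem⟩

theorem exists_smul_eq_corner_of_residueMap [Module.Finite R S] {e : S} (he : IsIdempotentElem e)
    (corner : ∀ x, ∃ c : ResidueField R,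
      residueMap R S e * x * residueMap R S e = c • residueMap R S e) (x : S) :
    ∃ c : R, e * x * e = c • e := by
  let cornerMap : S →ₗ[R] S := LinearMap.mulRight R e ∘ₗ LinearMap.mulLeft R e
  have cornerMap_apply (y : S) : cornerMap y = e * y * e := rfl
  have cornerMap_idem (y : S) : cornerMap (e * y * e) = e * y * e := by
    rw [cornerMap_apply, ← mul_assoc, ← mul_assoc, he.eq, mul_assoc, he.eq]
  suffices range_le : cornerMap.range ≤ Submodule.span R {e} by
    obtain ⟨c, hc⟩ := Submodule.mem_span_singleton.mp (range_le ⟨x, rfl⟩)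
    exact ⟨c, hc.symm⟩
  rw [LinearMap.range_eq_map]
  refine Submodule.le_of_le_smul_of_le_jacobson_bot (I := maximalIdeal R)
    (Submodule.FG.map cornerMap Module.Finite.fg_top)
    (jacobson_eq_maximalIdeal ⊥ bot_ne_top).ge ?_
  rintro _ ⟨y, -, rfl⟩
  obtain ⟨cbar, hcbar⟩ := corner (residueMap R S y)
  obtain ⟨c, rfl⟩ := residue_surjective cbar
  have remainder_mem : e * y * e - c • e ∈ maximalIdeal R • (⊤ : Submodule R S) := by
    rw [← residueMap_eq_zero_iff, map_sub, map_mul, map_mul, hcbar, map_smul, sub_eq_zero]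
    exact algebraMap_smul (ResidueField R) c _
  have remainder_fixed : cornerMap (e * y * e - c • e) = e * y * e - c • e := by
    rw [map_sub, map_smul, cornerMap_idem, cornerMap_apply e, he.eq, he.eq]
  rw [cornerMap_apply, ← add_sub_cancel (c • e) (e * y * e), ← remainder_fixed]
  refine Submodule.add_mem_sup (Submodule.smul_mem _ c (Submodule.mem_span_singleton_self e)) ?_
  rw [← Submodule.map_smul'']
  exact Submodule.mem_map_of_mem remainder_mem

theorem exists_linearMap_apply_eq_one_of_residueMap_ne_zero [Module.Projective R S] {x : S}
    (hx : residueMap R S x ≠ 0) : ∃ φ : S →ₗ[R] R, φ x = 1 := by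
  obtain ⟨ψ, hψ⟩ := Module.Projective.exists_dual_eq_one (ResidueField R) hx
  obtain ⟨φ, hφ⟩ := Module.projective_lifting_property (Algebra.linearMap R (ResidueField R))
    (ψ.restrictScalars R ∘ₗ (residueMap R S).toLinearMap) residue_surjective
  have residue_φ : residue R (φ x) = 1 := (LinearMap.congr_fun hφ x).trans hψ
  obtain ⟨u, hu⟩ : IsUnit (φ x) := by
    rw [← residue_ne_zero_iff_isUnit, residue_φ]
    exact one_ne_zero
  exact ⟨(↑u⁻¹ : R) • φ, by rw [LinearMap.smul_apply, ← hu, smul_eq_mul, Units.inv_mul]⟩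

theorem nonempty_algEquiv_matrix_of_isLocalRing [IsArtinianRing R] [Finite (ResidueField R)]
    [Nontrivial S] [Module.Free R S] [Module.Finite R S]
    (h : Function.Surjective (AlgHom.mulLeftRight R S)) {n : ℕ}
    (hn : Module.finrank R S = n ^ 2) : Nonempty (S ≃ₐ[R] Matrix (Fin n) (Fin n) R) := by
  have h_residue : Function.Surjective
      (AlgHom.mulLeftRight (ResidueField R) (ResidueField R ⊗[R] S)) :=
    surjective_mulLeftRight_of_surjective (residueMap R S) residueMap_surjective (t := 1)
      (by simp) fun F => by simpa using h F
  have : Nontrivial (ResidueField R ⊗[R] S) := by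
    refine Module.nontrivial_of_finrank_pos (R := ResidueField R) ?_
    rw [Module.finrank_baseChange]
    exact (Module.finrank_pos_iff_of_free R S).mpr inferInstance
  obtain ⟨ebar, idem, ebar_ne_zero, corner⟩ := exists_rankOne_idempotent h_residue
  obtain ⟨e, he, rfl⟩ := exists_isIdempotentElem_eq_of_ker_isNilpotent (residueMap R S).toRingHom
    (fun x hx => isNilpotent_of_residueMap_eq_zero hx) ebar (residueMap_surjective ebar) idem
  obtain ⟨φ, hφ⟩ := exists_linearMap_apply_eq_one_of_residueMap_ne_zero ebar_ne_zero
  obtain ⟨s, full⟩ := exists_sum_mul_mul_eq_one h hφ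
  exact nonempty_algEquiv_matrix_of_idempotent he
    (exists_smul_eq_corner_of_residueMap he corner) full hn

end LocalRing

end Splitting

/-! ### The discriminant controls two-sided multiplications -/

section Discriminant

open TensorProduct MulOpposite

variable {R R' S S' I m : Type*} [CommRing R] [CommRing R'] [Algebra R R'] [Ring S] [Ring S']
  [Algebra R S] [Algebra R' S'] [Algebra R S'] [IsScalarTower R R' S']

section BaseChange

variable {b : Module.Basis I R S} {β : Module.Basis I R' S'} {j : S →ₐ[R] S'}

theorem repr_algHom_apply [Finite I] (hβ : ∀ i, β i = j (b i)) (x : S) (i : I) :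
    β.repr (j x) i = algebraMap R R' (b.repr x i) := by
  have := Fintype.ofFinite I
  have j_eq : j x = ∑ k, algebraMap R R' (b.repr x k) • β k := by
    conv_lhs => rw [← b.sum_repr x, map_sum]
    simp only [map_smul, hβ, algebraMap_smul]
  rw [j_eq, β.repr_sum_self]

theorem toMatrix_eq_map_of_comm [Fintype I] [DecidableEq I] (hβ : ∀ i, β i = j (b i))
    {f : Module.End R S} {g : Module.End R' S'} (hfg : ∀ x, g (j x) = j (f x)) :
    LinearMap.toMatrix β β g = (LinearMap.toMatrix b b f).map (algebraMap R R') := by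
  ext i k
  rw [map_apply, LinearMap.toMatrix_apply, LinearMap.toMatrix_apply, hβ, hfg,
    repr_algHom_apply hβ]

theorem det_mulLeft_eq_map [Finite I] (hβ : ∀ i, β i = j (b i)) (x : S) :
    LinearMap.det (LinearMap.mulLeft R' (j x)) =
      algebraMap R R' (LinearMap.det (LinearMap.mulLeft R x)) := by
  classical
  have := Fintype.ofFinite I
  rw [← LinearMap.det_toMatrix β, ← LinearMap.det_toMatrix b,
    toMatrix_eq_map_of_comm hβ (f := LinearMap.mulLeft R x) (by simp)]
  exact (RingHom.map_det _ _).symm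

end BaseChange

variable [Fintype I] [DecidableEq I]

/-- The coordinates of the two-sided multiplications `x ↦ bᵢ x bₖ` with respect to a basis `b`: row
`(i, k)` lists the entries of the matrix of that endomorphism. -/
noncomputable def twoSidedMulMatrix (b : Module.Basis I R S) : Matrix (I × I) (I × I) R :=
  of fun q s =>
    LinearMap.toMatrix b b (AlgHom.mulLeftRight R S (b q.1 ⊗ₜ op (b q.2))) s.1 s.2

theorem det_twoSidedMulMatrix_smul_mem_range (b : Module.Basis I R S) (F : Module.End R S) :
    (twoSidedMulMatrix b).det • F ∈ (AlgHom.mulLeftRight R S).range := by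
  let coords : I × I → R := fun s => LinearMap.toMatrix b b F s.1 s.2
  let c := coords ᵥ* (twoSidedMulMatrix b).adjugate
  have hc : c ᵥ* twoSidedMulMatrix b = (twoSidedMulMatrix b).det • coords := by
    rw [vecMul_vecMul, adjugate_mul, vecMul_smul, vecMul_one]
  refine ⟨∑ q, c q • (b q.1 ⊗ₜ op (b q.2)), (LinearMap.toMatrix b b).injective ?_⟩
  ext i k
  simpa [Matrix.sum_apply, vecMul, dotProduct, twoSidedMulMatrix, coords] using congrFun hc (i, k)

theorem twoSidedMulMatrix_eq_map {b : Module.Basis I R S} {β : Module.Basis I R' S'}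
    {j : S →ₐ[R] S'} (hβ : ∀ i, β i = j (b i)) :
    twoSidedMulMatrix β = (twoSidedMulMatrix b).map (algebraMap R R') := by
  ext q s
  refine congrFun (congrFun (toMatrix_eq_map_of_comm hβ fun x => ?_) s.1) s.2
  simp [hβ]

theorem twoSidedMulMatrix_mul_transpose_submatrix_swap (b : Module.Basis I R S) :
    twoSidedMulMatrix b * ((twoSidedMulMatrix b).submatrix id Prod.swap)ᵀ = of fun q s =>
      LinearMap.trace R S (AlgHom.mulLeftRight R S ((b q.1 * b s.1) ⊗ₜ op (b s.2 * b q.2))) := by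
  ext q s
  rw [of_apply, op_mul, ← Algebra.TensorProduct.tmul_mul_tmul, map_mul,
    LinearMap.trace_eq_matrix_trace R b, LinearMap.toMatrix_mul, Matrix.trace, mul_apply,
    Fintype.sum_prod_type]
  refine Finset.sum_congr rfl fun i _ => ?_
  rw [diag_apply, mul_apply]
  rfl

variable [Fintype m]

/-- The Gram matrix of a family of matrices for the trace form `(X, Y) ↦ tr (X Y)`. -/
def traceGram (x : I → Matrix m m R) : Matrix I I R :=
  of fun i k => (x i * x k).trace

theorem det_traceGram_sum_smul (b x : I → Matrix m m R) (c : Matrix I I R)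
    (hx : ∀ i, x i = ∑ k, c i k • b k) :
    (traceGram x).det = c.det ^ 2 * (traceGram b).det := by
  have gram_eq : traceGram x = c * traceGram b * cᵀ := by
    ext i k
    simp only [traceGram, of_apply, hx, Finset.sum_mul_sum]
    simp only [trace_sum, mul_apply, of_apply, Finset.sum_mul, transpose_apply]
    rw [Finset.sum_comm]
    refine Finset.sum_congr rfl fun u _ => Finset.sum_congr rfl fun v _ => ?_
    rw [smul_mul_smul_comm, trace_smul, smul_eq_mul]
    ring
  rw [gram_eq, det_mul, det_mul, det_transpose]
  ring

variable [DecidableEq m]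

theorem toMatrix_stdBasis_mulLeftRight (X Y : Matrix m m R) :
    LinearMap.toMatrix (stdBasis R m m) (stdBasis R m m) (AlgHom.mulLeftRight R _ (X ⊗ₜ op Y)) =
      kroneckerMap (· * ·) X Yᵀ := by
  ext ⟨i, k⟩ ⟨i', k'⟩
  have repr_apply (Z : Matrix m m R) : (stdBasis R m m).repr Z (i, k) = Z i k := by
    simp [stdBasis]
  rw [LinearMap.toMatrix_apply, repr_apply, stdBasis_eq_single, AlgHom.mulLeftRight_apply,
    unop_op, mul_assoc, mul_apply, Finset.sum_eq_single i']
  · simp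
  · intro l _ hl
    simp [hl]
  · simp

theorem trace_mulLeftRight_matrix (X Y : Matrix m m R) :
    LinearMap.trace R _ (AlgHom.mulLeftRight R (Matrix m m R) (X ⊗ₜ op Y)) = X.trace * Y.trace := by
  rw [LinearMap.trace_eq_matrix_trace R (stdBasis R m m), toMatrix_stdBasis_mulLeftRight,
    trace_kronecker, trace_transpose]

theorem det_mulLeft_matrix (X : Matrix m m R) :
    LinearMap.det (LinearMap.mulLeft R X) = X.det ^ Fintype.card m := by
  have mulLeft_eq : LinearMap.mulLeft R X = AlgHom.mulLeftRight R _ (X ⊗ₜ op 1) := by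
    ext1 Y
    simp
  rw [← LinearMap.det_toMatrix (stdBasis R m m), mulLeft_eq, toMatrix_stdBasis_mulLeftRight,
    transpose_one, det_kronecker, det_one, one_pow, mul_one]

theorem sign_mul_det_twoSidedMulMatrix_sq (b : Module.Basis I R (Matrix m m R)) :
    ((Equiv.Perm.sign (Equiv.prodComm I I) : ℤ) : R) * (twoSidedMulMatrix b).det ^ 2 =
      (traceGram b).det ^ (2 * Fintype.card I) := by
  have kronecker_eq : twoSidedMulMatrix b * ((twoSidedMulMatrix b).submatrix id Prod.swap)ᵀ =
      kroneckerMap (· * ·) (traceGram b) (traceGram b) := by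
    rw [twoSidedMulMatrix_mul_transpose_submatrix_swap]
    ext q s
    simp only [of_apply, trace_mulLeftRight_matrix, kroneckerMap_apply, traceGram]
    rw [trace_mul_comm (b s.2)]
  have det_eq := congrArg det kronecker_eq
  rw [det_mul, det_transpose, det_kronecker] at det_eq
  calc _ = (twoSidedMulMatrix b).det *
        ((twoSidedMulMatrix b).submatrix id (Equiv.prodComm I I)).det := by
        rw [det_permute']
        ring
    _ = _ := by
        rw [← pow_add, ← two_mul] at det_eq
        exact det_eq

theorem det_twoSidedMulMatrix_dvd_pow [FaithfulSMul R R'] {b : Module.Basis I R S}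
    {β : Module.Basis I R' (Matrix m m R')} {j : S →ₐ[R] Matrix m m R'} (hβ : ∀ i, β i = j (b i))
    {x : I → S} {d : R} (hd : algebraMap R R' d = (traceGram fun i => j (x i)).det) :
    (twoSidedMulMatrix b).det ∣ d ^ (2 * Fintype.card I) := by
  let c : Matrix I I R := of fun i k => b.repr (x i) k
  have hc : algebraMap R R' d = algebraMap R R' (c.det ^ 2) * (traceGram β).det := by
    rw [hd, det_traceGram_sum_smul β _ (c.map (algebraMap R R')) fun i => ?_, map_pow,
      RingHom.map_det, RingHom.mapMatrix_apply]
    rw [← β.sum_repr (j (x i))]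
    simp [repr_algHom_apply hβ, c]
  have det_eq : (twoSidedMulMatrix β).det = algebraMap R R' (twoSidedMulMatrix b).det := by
    rw [twoSidedMulMatrix_eq_map hβ, RingHom.map_det, RingHom.mapMatrix_apply]
  have pow_eq : d ^ (2 * Fintype.card I) = (c.det ^ 2) ^ (2 * Fintype.card I) *
      (((Equiv.Perm.sign (Equiv.prodComm I I) : ℤ) : R) * (twoSidedMulMatrix b).det ^ 2) := by
    apply FaithfulSMul.algebraMap_injective R R'
    rw [map_pow, hc, mul_pow, ← sign_mul_det_twoSidedMulMatrix_sq, det_eq]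
    simp
  exact pow_eq ▸ ((dvd_pow_self _ two_ne_zero).mul_left _).mul_left _

end Discriminant

/-! ### Splitting an order modulo an integer -/

section SplittingMod

open TensorProduct

theorem isLocalRing_zmod_prime_pow {p k : ℕ} (hp : p.Prime) (hk : k ≠ 0) :
    IsLocalRing (ZMod (p ^ k)) := by
  have : Fact (1 < p ^ k) := ⟨Nat.one_lt_pow hk hp.one_lt⟩
  refine IsLocalRing.of_isUnit_or_isUnit_one_sub_self fun a => or_iff_not_imp_left.mpr fun ha => ?_
  obtain ⟨c, rfl⟩ := ZMod.natCast_zmod_surjective a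
  rw [ZMod.isUnit_natCast_iff_not_dvd_pow hp (Nat.pos_of_ne_zero hk), not_not] at ha
  have nilpotent : IsNilpotent (c : ZMod (p ^ k)) :=
    ⟨k, by rw [← Nat.cast_pow, ZMod.natCast_eq_zero_iff]; exact pow_dvd_pow_of_dvd ha k⟩
  exact nilpotent.isUnit_one_sub

variable {O : Type*} [Ring O] {n : ℕ}

/-- `φ` induces an isomorphism of `O / M O` onto the full matrix ring over `ℤ / M`. -/
structure IsSplittingMod {M : ℕ} (φ : O →+* Matrix (Fin n) (Fin n) (ZMod M)) : Prop where
  surjective : Function.Surjective φ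
  dvd_of_map_eq_zero : ∀ ⦃x⦄, φ x = 0 → (M : O) ∣ x

theorem natCast_dvd_of_one_tmul_eq_zero [Module.Free ℤ O] [Module.Finite ℤ O] {q : ℕ} {x : O}
    (hx : (1 : ZMod q) ⊗ₜ[ℤ] x = 0) : (q : O) ∣ x := by
  let b := Module.finBasis ℤ O
  have dvd_repr (i) : (q : ℤ) ∣ b.repr x i := by
    have repr_eq := repr_algHom_apply (b := b) (β := Algebra.TensorProduct.basis (ZMod q) b)
      (j := Algebra.TensorProduct.includeRight) (fun i => by simp) x i
    rw [← ZMod.intCast_zmod_eq_zero_iff_dvd]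
    simpa [hx] using repr_eq.symm
  rw [← b.sum_repr x]
  refine Finset.dvd_sum fun i _ => ?_
  rw [zsmul_eq_mul]
  exact Dvd.dvd.mul_right (by exact_mod_cast Int.cast_dvd_cast (α := O) _ _ (dvd_repr i)) _

theorem exists_isSplittingMod_prime_pow [Nontrivial O] [Module.Free ℤ O] [Module.Finite ℤ O]
    (hn : Module.finrank ℤ O = n ^ 2) {t : ℤ}
    (ht : ∀ F : Module.End ℤ O, t • F ∈ (AlgHom.mulLeftRight ℤ O).range) {p k : ℕ} (hp : p.Prime)
    (hk : k ≠ 0) (hpt : IsCoprime t (p ^ k : ℕ)) :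
    ∃ φ : O →+* Matrix (Fin n) (Fin n) (ZMod (p ^ k)), IsSplittingMod φ := by
  have : NeZero (p ^ k) := ⟨pow_ne_zero k hp.ne_zero⟩
  have := isLocalRing_zmod_prime_pow hp hk
  have : Finite (IsLocalRing.ResidueField (ZMod (p ^ k))) :=
    Finite.of_surjective _ IsLocalRing.residue_surjective
  have finrank_eq : Module.finrank (ZMod (p ^ k)) (ZMod (p ^ k) ⊗[ℤ] O) = n ^ 2 :=
    Module.finrank_baseChange.trans hn
  have : Nontrivial (ZMod (p ^ k) ⊗[ℤ] O) := by
    refine Module.nontrivial_of_finrank_pos (R := ZMod (p ^ k)) ?_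
    rw [Module.finrank_baseChange]
    exact Module.finrank_pos
  let reduction : O →ₐ[ℤ] ZMod (p ^ k) ⊗[ℤ] O := Algebra.TensorProduct.includeRight
  have reduction_surjective : Function.Surjective reduction :=
    Algebra.TensorProduct.includeRight_surjective O ZMod.intCast_surjective
  obtain ⟨E⟩ := nonempty_algEquiv_matrix_of_isLocalRing
    (surjective_mulLeftRight_of_surjective reduction reduction_surjective
      ((ZMod.coe_int_isUnit_iff_isCoprime t (p ^ k)).mpr hpt.symm) ht) finrank_eq
  exact ⟨(E : _ →+* _).comp reduction.toRingHom, E.surjective.comp reduction_surjective,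
    fun x hx => natCast_dvd_of_one_tmul_eq_zero ((map_eq_zero_iff E E.injective).mp hx)⟩

theorem natCast_mul_dvd_of_coprime {a b : ℕ} (hab : a.Coprime b) {x : O} (ha : (a : O) ∣ x)
    (hb : (b : O) ∣ x) : ((a * b : ℕ) : O) ∣ x := by
  obtain ⟨u, v, huv⟩ := Nat.isCoprime_iff_coprime.mpr hab
  obtain ⟨y, hy⟩ := ha
  obtain ⟨w, hw⟩ := hb
  simp only [← nsmul_eq_mul, ← natCast_zsmul] at hy hw
  refine ⟨u • w + v • y, ?_⟩
  calc x = (u * a) • x + (v * b) • x := by rw [← add_smul, huv, one_smul]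
    _ = (u * a) • (b : ℤ) • w + (v * b) • (a : ℤ) • y := by rw [← hw, ← hy]
    _ = ((a * b : ℕ) : ℤ) • (u • w + v • y) := by push_cast; module
    _ = _ := by rw [natCast_zsmul, nsmul_eq_mul]

theorem natCast_smul_matrix_zmod {M : ℕ} (X : Matrix (Fin n) (Fin n) (ZMod M)) :
    (M : ℤ) • X = 0 := by
  ext
  simp

theorem surjective_prod_of_coprime {a b : ℕ} (hab : a.Coprime b)
    {φ : O →+* Matrix (Fin n) (Fin n) (ZMod a)} (hφ : Function.Surjective φ)
    {ψ : O →+* Matrix (Fin n) (Fin n) (ZMod b)} (hψ : Function.Surjective ψ) :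
    Function.Surjective (φ.prod ψ) := by
  rintro ⟨X, Y⟩
  obtain ⟨u, v, huv⟩ := Nat.isCoprime_iff_coprime.mpr hab
  obtain ⟨x, rfl⟩ := hφ X
  obtain ⟨y, rfl⟩ := hψ Y
  have x_add : (v * b) • x + (u * a) • y = x + u • (a : ℤ) • (y - x) := by
    rw [eq_sub_of_add_eq' huv]
    module
  have y_add : (v * b) • x + (u * a) • y = y + v • (b : ℤ) • (x - y) := by
    rw [eq_sub_of_add_eq huv]
    module
  refine ⟨(v * b) • x + (u * a) • y, Prod.ext ?_ ?_⟩
  · change φ _ = φ x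
    rw [x_add]
    simp only [map_add, map_zsmul, natCast_smul_matrix_zmod, smul_zero, add_zero]
  · change ψ _ = ψ y
    rw [y_add]
    simp only [map_add, map_zsmul, natCast_smul_matrix_zmod, smul_zero, add_zero]

/-- Matrices over a product ring are pairs of matrices. -/
def matrixProdRingEquiv (m R R' : Type*) [Fintype m] [DecidableEq m] [Ring R] [Ring R'] :
    Matrix m m (R × R') ≃+* Matrix m m R × Matrix m m R' where
  __ := (RingHom.fst R R').mapMatrix.prod (RingHom.snd R R').mapMatrix
  invFun X := of fun i k => (X.1 i k, X.2 i k)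
  left_inv _ := rfl
  right_inv _ := rfl

theorem exists_isSplittingMod_mul {a b : ℕ} (hab : a.Coprime b)
    {φ : O →+* Matrix (Fin n) (Fin n) (ZMod a)} (hφ : IsSplittingMod φ)
    {ψ : O →+* Matrix (Fin n) (Fin n) (ZMod b)} (hψ : IsSplittingMod ψ) :
    ∃ χ : O →+* Matrix (Fin n) (Fin n) (ZMod (a * b)), IsSplittingMod χ := by
  let e : Matrix (Fin n) (Fin n) (ZMod a) × Matrix (Fin n) (Fin n) (ZMod b) ≃+*
      Matrix (Fin n) (Fin n) (ZMod (a * b)) :=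
    (matrixProdRingEquiv ..).symm.trans (ZMod.chineseRemainder hab).symm.mapMatrix
  refine ⟨(e : _ →+* _).comp (φ.prod ψ),
    e.surjective.comp (surjective_prod_of_coprime hab hφ.surjective hψ.surjective),
    fun x hx => ?_⟩
  have prod_eq_zero : (φ x, ψ x) = 0 := (map_eq_zero_iff e e.injective).mp hx
  exact natCast_mul_dvd_of_coprime hab
    (hφ.dvd_of_map_eq_zero (congrArg Prod.fst prod_eq_zero))
    (hψ.dvd_of_map_eq_zero (congrArg Prod.snd prod_eq_zero))

theorem exists_isSplittingMod [Nontrivial O] [Module.Free ℤ O] [Module.Finite ℤ O]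
    (hn : Module.finrank ℤ O = n ^ 2) {t : ℤ}
    (ht : ∀ F : Module.End ℤ O, t • F ∈ (AlgHom.mulLeftRight ℤ O).range) {M : ℕ} (hM : M ≠ 0)
    (hMt : IsCoprime t M) : ∃ φ : O →+* Matrix (Fin n) (Fin n) (ZMod M), IsSplittingMod φ := by
  induction M using Nat.recOnPosPrimePosCoprime with
  | prime_pow p k hp hk => exact exists_isSplittingMod_prime_pow hn ht hp hk.ne' hMt
  | zero => exact absurd rfl hM
  | one =>
    have all_eq (X Y : Matrix (Fin n) (Fin n) (ZMod 1)) : X = Y :=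
      ext fun _ _ => Subsingleton.elim _ _
    exact ⟨⟨⟨⟨fun _ => 1, rfl⟩, fun _ _ => all_eq _ _⟩, all_eq _ _, fun _ _ => all_eq _ _⟩,
      fun X => ⟨0, all_eq _ _⟩, fun x _ => by simp⟩
  | coprime a b ha hb hab iha ihb =>
    rw [Nat.cast_mul] at hMt
    obtain ⟨φ, hφ⟩ := iha (by omega) hMt.of_mul_right_left
    obtain ⟨ψ, hψ⟩ := ihb (by omega) hMt.of_mul_right_right
    exact exists_isSplittingMod_mul hab hφ hψ

end SplittingMod

/-! ### Column lattices -/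

section ColumnLattice

theorem dvd_matrix_iff_forall_col_mem_range {m R : Type*} [Fintype m] [CommRing R]
    {X Y : Matrix m m R} : X ∣ Y ↔ ∀ k, Y.col k ∈ X.mulVecLin.range := by
  constructor
  · rintro ⟨Z, rfl⟩ k
    exact ⟨Z.col k, rfl⟩
  · intro h
    choose Z hZ using h
    exact ⟨(of Z)ᵀ, ext fun i k => (congrFun (hZ k) i).symm⟩

variable {O : Type*} [Ring O] {n M : ℕ} {φ : O →+* Matrix (Fin n) (Fin n) (ZMod M)} {γ γ' : O}

variable (φ γ) in
/-- The lattice of integer vectors that modulo `M` lie in the column space of `φ γ`. For a splitting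
`φ` modulo `M`, it encodes the right ideal generated by a divisor `γ` of `M`. -/
def columnLattice : AddSubgroup (Fin n → ℤ) :=
  (φ γ).mulVecLin.range.toAddSubgroup.comap ((Int.castAddHom (ZMod M)).compLeft (Fin n))

theorem compLeft_intCastAddHom_surjective :
    Function.Surjective ((Int.castAddHom (ZMod M)).compLeft (Fin n)) :=
  ZMod.intCast_surjective.comp_left

namespace IsSplittingMod

theorem dvd_iff_map_dvd_map (hφ : IsSplittingMod φ) (hγ : γ ∣ (M : O)) {x : O} :
    γ ∣ x ↔ φ γ ∣ φ x := by
  refine ⟨map_dvd φ, ?_⟩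
  rintro ⟨Y, hY⟩
  obtain ⟨y, rfl⟩ := hφ.surjective Y
  have remainder : γ ∣ x - γ * y :=
    hγ.trans (hφ.dvd_of_map_eq_zero (by rw [map_sub, map_mul, hY, sub_self]))
  exact (dvd_sub_left (dvd_mul_right γ y)).mp remainder

theorem dvd_of_columnLattice_eq (hφ : IsSplittingMod φ) (hγ : γ ∣ (M : O))
    (h : columnLattice φ γ = columnLattice φ γ') : γ ∣ γ' := by
  have range_eq : (φ γ).mulVecLin.range = (φ γ').mulVecLin.range :=
    Submodule.toAddSubgroup_injective
      (AddSubgroup.comap_injective compLeft_intCastAddHom_surjective h)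
  rw [hφ.dvd_iff_map_dvd_map hγ, dvd_matrix_iff_forall_col_mem_range, range_eq,
    ← dvd_matrix_iff_forall_col_mem_range]

theorem index_range_mulLeft_eq_index_columnLattice_pow (hφ : IsSplittingMod φ)
    (hγ : γ ∣ (M : O)) :
    (AddMonoidHom.mulLeft γ).range.index = (columnLattice φ γ).index ^ n := by
  let columnSpace := (φ γ).mulVecLin.range.toAddSubgroup
  let columns : O →+ (Fin n → Fin n → ZMod M) :=
    (transposeAddEquiv (Fin n) (Fin n) (ZMod M)).toAddMonoidHom.comp φ.toAddMonoidHom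
  have columns_surjective : Function.Surjective columns :=
    (transposeAddEquiv (Fin n) (Fin n) (ZMod M)).surjective.comp hφ.surjective
  have range_eq : (AddMonoidHom.mulLeft γ).range =
      (AddSubgroup.pi Set.univ fun _ : Fin n => columnSpace).comap columns := by
    ext x
    rw [AddSubgroup.mem_comap, AddSubgroup.mem_pi]
    calc x ∈ (AddMonoidHom.mulLeft γ).range ↔ γ ∣ x := by simp [dvd_def, eq_comm]
      _ ↔ ∀ k, (φ x).col k ∈ columnSpace := by
        rw [hφ.dvd_iff_map_dvd_map hγ, dvd_matrix_iff_forall_col_mem_range]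
        rfl
      _ ↔ _ := by
        simp only [Set.mem_univ, true_imp_iff]
        rfl
  rw [range_eq, AddSubgroup.index_comap_of_surjective _ columns_surjective, AddSubgroup.index_pi,
    columnLattice, AddSubgroup.index_comap_of_surjective _ compLeft_intCastAddHom_surjective,
    Finset.prod_const, Finset.card_univ, Fintype.card_fin]

end IsSplittingMod

end ColumnLattice

/-! ### Orders in real-split division algebras -/

section Order

theorem index_range_mulLeft_eq_natAbs_det {O : Type*} [Ring O] [Module.Free ℤ O]
    [Module.Finite ℤ O] {γ : O} (hγ : IsLeftRegular γ) :
    (AddMonoidHom.mulLeft γ).range.index = (LinearMap.det (LinearMap.mulLeft ℤ γ)).natAbs :=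
  (Submodule.natAbs_det_equiv (LinearMap.mulLeft ℤ γ).range
    (LinearEquiv.ofInjective (LinearMap.mulLeft ℤ γ) hγ)).symm

theorem dvd_natCast_index_range_mulLeft {O : Type*} [Ring O] (γ : O) :
    γ ∣ ((AddMonoidHom.mulLeft γ).range.index : O) := by
  obtain ⟨x, hx⟩ := (AddMonoidHom.mulLeft γ).range.nsmul_index_mem 1
  exact ⟨x, by simpa using hx.symm⟩

universe u

variable {n : ℕ} {A : Type u} [DivisionRing A] [CharZero A]

theorem IsOrder.moduleFinite {O : Subring A} (hO : IsOrder A O) : Module.Finite ℤ O :=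
  Module.Finite.iff_addGroup_fg.mpr ((AddGroup.fg_iff_addSubgroup_fg O.toAddSubgroup).mpr hO.1)

theorem IsOrder.exists_basis {O : Subring A} (hO : IsOrder A O) {k : ℕ}
    (hk : Module.finrank ℚ A = k) :
    ∃ (b : Module.Basis (Fin k) ℤ O) (c : Module.Basis (Fin k) ℚ A), ∀ i, c i = b i := by
  have := hO.moduleFinite
  let b := Module.finBasis ℤ O
  have linearIndependent : LinearIndependent ℚ (fun i => (b i : A)) :=
    (LinearIndependent.iff_fractionRing ℤ ℚ).mp <|
      b.linearIndependent.map' O.subtype.toAddMonoidHom.toIntLinearMap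
        (LinearMap.ker_eq_bot.mpr Subtype.val_injective)
  have span_eq_top : ⊤ ≤ Submodule.span ℚ (Set.range fun i => (b i : A)) := by
    rw [← hO.2, Submodule.span_le]
    intro x hx
    have x_eq : x = ∑ i, b.repr ⟨x, hx⟩ i • (b i : A) := by
      conv_lhs => rw [← Subtype.coe_mk x hx, ← b.sum_repr ⟨x, hx⟩]
      simp
    rw [x_eq]
    exact sum_mem fun i _ => zsmul_mem (Submodule.subset_span (Set.mem_range_self i)) _
  let c := Module.Basis.mk linearIndependent span_eq_top
  have finrank_eq : Module.finrank ℤ O = k := by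
    rw [← hk, Module.finrank_eq_card_basis c, Fintype.card_fin]
  exact ⟨b.reindex (finCongr finrank_eq), c.reindex (finCongr finrank_eq), fun i => by simp [c]⟩

/-- The restriction to a subring of a matrix representation over the real numbers. -/
def realRepresentation (ι : A →ₐ[ℚ] Matrix (Fin n) (Fin n) ℝ) (O : Subring A) :
    O →ₐ[ℤ] Matrix (Fin n) (Fin n) ℝ :=
  (ι.toRingHom.comp O.subtype).toIntAlgHom

@[simp]
theorem realRepresentation_apply (ι : A →ₐ[ℚ] Matrix (Fin n) (Fin n) ℝ) (O : Subring A) (γ : O) :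
    realRepresentation ι O γ = ι γ :=
  rfl

theorem det_ne_zero_of_ne_zero (ι : A →ₐ[ℚ] Matrix (Fin n) (Fin n) ℝ) {x : A} (hx : x ≠ 0) :
    (ι x).det ≠ 0 :=
  ((isUnit_iff_isUnit_det _).mp ((IsUnit.mk0 x hx).map ι)).ne_zero

variable {ι : A →ₐ[ℚ] Matrix (Fin n) (Fin n) ℝ} {O : Subring A}

theorem IsOrder.exists_basis_matrix [NeZero n] (hcenter : Subalgebra.center ℚ A = ⊥)
    (hrank : Module.finrank ℚ A = n ^ 2) (hO : IsOrder A O) :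
    ∃ (b : Module.Basis (Fin (n ^ 2)) ℤ O)
      (β : Module.Basis (Fin (n ^ 2)) ℝ (Matrix (Fin n) (Fin n) ℝ)),
      ∀ i, β i = realRepresentation ι O (b i) := by
  have : Module.Finite ℚ A :=
    Module.finite_of_finrank_pos (hrank ▸ pow_pos (NeZero.pos n) 2)
  obtain ⟨b, c, hbc⟩ := hO.exists_basis hrank
  have linearIndependent : LinearIndependent ℝ (ι ∘ c) :=
    linearIndependent_algHom_comp_basis (surjective_mulLeftRight_of_center_eq_bot hcenter) c ι
  have card_eq : Fintype.card (Fin (n ^ 2)) = Module.finrank ℝ (Matrix (Fin n) (Fin n) ℝ) := by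
    simp [Module.finrank_matrix, sq]
  exact ⟨b, basisOfLinearIndependentOfCardEqFinrank linearIndependent card_eq,
    fun i => by simp [hbc]⟩

section Basis

variable {b : Module.Basis (Fin (n ^ 2)) ℤ O}
  {β : Module.Basis (Fin (n ^ 2)) ℝ (Matrix (Fin n) (Fin n) ℝ)}

theorem intCast_det_mulLeft_eq_pow (hβ : ∀ i, β i = realRepresentation ι O (b i)) (γ : O) :
    ((LinearMap.det (LinearMap.mulLeft ℤ γ) : ℤ) : ℝ) = (ι γ).det ^ n := by
  have det_eq := det_mulLeft_eq_map hβ γ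
  rw [det_mulLeft_matrix, Fintype.card_fin] at det_eq
  exact det_eq.symm

theorem eq_zero_of_abs_det_lt_one [NeZero n] (hβ : ∀ i, β i = realRepresentation ι O (b i))
    {γ : O} (hγ : |(ι γ).det| < 1) : γ = 0 := by
  have det_eq_zero : LinearMap.det (LinearMap.mulLeft ℤ γ) = 0 := by
    rw [← Int.abs_lt_one_iff, ← Int.cast_lt (R := ℝ), Int.cast_abs, intCast_det_mulLeft_eq_pow hβ,
      abs_pow, Int.cast_one]
    exact pow_lt_one₀ (abs_nonneg _) hγ (NeZero.ne n)
  have det_eq := intCast_det_mulLeft_eq_pow hβ γ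
  rw [det_eq_zero, Int.cast_zero, eq_comm, pow_eq_zero_iff (NeZero.ne n)] at det_eq
  by_contra hne
  exact det_ne_zero_of_ne_zero ι (Subtype.coe_ne_coe.mpr hne) det_eq

theorem index_range_mulLeft_eq_pow [NeZero n] (hβ : ∀ i, β i = realRepresentation ι O (b i))
    {γ : O} {m : ℕ} (hm : m ≠ 0) (hγ : (ι γ).det = m) :
    (AddMonoidHom.mulLeft γ).range.index = m ^ n := by
  have := Module.Free.of_basis b
  have := Module.Finite.of_basis b
  have γ_ne_zero : γ ≠ 0 := by
    rintro rfl
    simp [eq_comm, hm] at hγ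
  have det_eq : LinearMap.det (LinearMap.mulLeft ℤ γ) = (m ^ n : ℕ) := by
    have := intCast_det_mulLeft_eq_pow hβ γ
    rw [hγ] at this
    exact_mod_cast this
  rw [index_range_mulLeft_eq_natAbs_det (mul_right_injective₀ γ_ne_zero), det_eq,
    Int.natAbs_natCast]

theorem IsDisc.exists_det_twoSidedMulMatrix_dvd_pow
    (hβ : ∀ i, β i = realRepresentation ι O (b i)) {D : ℕ} (hD : IsDisc ι O D) :
    ∃ k : ℕ, (twoSidedMulMatrix b).det ∣ (D : ℤ) ^ k := by
  have span_le : Ideal.span {(D : ℤ)} ≤ (Ideal.span {(twoSidedMulMatrix b).det}).radical := by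
    rw [← hD, Ideal.span_le]
    rintro d ⟨x, hx, hd⟩
    exact ⟨_, Ideal.mem_span_singleton.mpr <|
      det_twoSidedMulMatrix_dvd_pow hβ (x := fun i => ⟨x i, hx i⟩) (by simpa [traceGram] using hd)⟩
  obtain ⟨k, hk⟩ := span_le (Ideal.mem_span_singleton_self _)
  exact ⟨k, Ideal.mem_span_singleton.mp hk⟩

theorem IsDisc.exists_isSplittingMod (hβ : ∀ i, β i = realRepresentation ι O (b i))
    {D : ℕ} (hD : IsDisc ι O D) {M : ℕ} (hM : M ≠ 0) (hMD : M.Coprime D) :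
    ∃ φ : O →+* Matrix (Fin n) (Fin n) (ZMod M), IsSplittingMod φ := by
  have := Module.Free.of_basis b
  have := Module.Finite.of_basis b
  obtain ⟨k, hk⟩ := hD.exists_det_twoSidedMulMatrix_dvd_pow hβ
  have finrank_eq : Module.finrank ℤ O = n ^ 2 := by
    rw [Module.finrank_eq_card_basis b, Fintype.card_fin]
  have coprime : IsCoprime (twoSidedMulMatrix b).det (M : ℤ) :=
    (Nat.isCoprime_iff_coprime.mpr hMD).symm.pow_left.of_isCoprime_of_dvd_left hk
  exact _root_.exists_isSplittingMod finrank_eq (det_twoSidedMulMatrix_smul_mem_range b) hM coprime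

end Basis

theorem encard_le_encard_setOf_index_eq [NeZero n] (hcenter : Subalgebra.center ℚ A = ⊥)
    (hrank : Module.finrank ℚ A = n ^ 2) (hO : IsOrder A O) {D : ℕ} (hD : IsDisc ι O D) {m : ℕ}
    (hm : m ≠ 0) (hmD : m.Coprime D) {T : Set A} (hT : T ⊆ O)
    (det_eq : ∀ γ ∈ T, (ι γ).det = m)
    (det_sub_lt : ∀ γ ∈ T, ∀ γ' ∈ T, |(ι (γ' - γ)).det| < m) :
    T.encard ≤ {H : AddSubgroup (Fin n → ℤ) | H.index = m}.encard := by
  obtain ⟨b, β, hβ⟩ := hO.exists_basis_matrix (ι := ι) hcenter hrank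
  obtain ⟨φ, hφ⟩ := hD.exists_isSplittingMod hβ (pow_ne_zero n hm) (hmD.pow_left n)
  have index_eq {γ : O} (hγ : (γ : A) ∈ T) : (AddMonoidHom.mulLeft γ).range.index = m ^ n :=
    index_range_mulLeft_eq_pow hβ hm (det_eq γ hγ)
  have dvd_pow {γ : O} (hγ : (γ : A) ∈ T) : γ ∣ ((m ^ n : ℕ) : O) :=
    index_eq hγ ▸ dvd_natCast_index_range_mulLeft γ
  rw [← Set.encard_preimage_of_injective_subset_range Subtype.val_injective
    (hT.trans Subtype.range_coe.ge)]
  refine Set.encard_le_encard_of_injOn (f := columnLattice φ) (fun γ hγ => ?_)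
    fun γ hγ γ' hγ' h => ?_
  · have index_pow := hφ.index_range_mulLeft_eq_index_columnLattice_pow (dvd_pow hγ)
    rw [index_eq hγ] at index_pow
    exact (Nat.pow_left_injective (NeZero.ne n) index_pow).symm
  · obtain ⟨u, rfl⟩ := hφ.dvd_of_columnLattice_eq (dvd_pow hγ) h
    have det_lt : |(ι ((u - 1 : O) : A)).det| < 1 := by
      have m_pos : (0 : ℝ) < m := by positivity
      have lt := det_sub_lt γ hγ _ hγ'
      have sub_eq : ((γ * u : O) : A) - γ = γ * ((u - 1 : O) : A) := by
        push_cast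
        rw [mul_sub, mul_one]
      rw [sub_eq, map_mul, det_mul, det_eq γ hγ, abs_mul, Nat.abs_cast] at lt
      exact lt_of_mul_lt_mul_left (lt.trans_eq (mul_one _).symm) m_pos.le
    rw [sub_eq_zero.mp (eq_zero_of_abs_det_lt_one hβ det_lt), mul_one]

theorem det_rpow_smul_conj [NeZero n] (z : GeneralLinearGroup (Fin n) ℝ) {m : ℝ} (hm : 0 ≤ m)
    (Y : Matrix (Fin n) (Fin n) ℝ) :
    (m ^ (-(1 : ℝ) / n) • ((z⁻¹).val * Y * z.val)).det = Y.det / m := by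
  have n_ne_zero : (n : ℝ) ≠ 0 := by exact_mod_cast NeZero.ne n
  rw [det_smul, Fintype.card_fin, ← Real.rpow_natCast, ← Real.rpow_mul hm,
    div_mul_cancel₀ _ n_ne_zero, Real.rpow_neg_one, det_units_conj', div_eq_inv_mul]

theorem exists_abs_det_sub_lt_of_mem_OSet (hn : Odd n) : ∃ ρ₀ : ℝ, 0 < ρ₀ ∧
    ∀ {A : Type u} [DivisionRing A] [CharZero A] {ι : A →ₐ[ℚ] Matrix (Fin n) (Fin n) ℝ}
      {O : Subring A} {z : GeneralLinearGroup (Fin n) ℝ} {m : ℕ} {ρ : ℝ}, m ≠ 0 → ρ ≤ ρ₀ →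
      ∀ γ ∈ OSet ι O z m ρ, ∀ γ' ∈ OSet ι O z m ρ, |(ι (γ' - γ)).det| < m := by
  obtain ⟨ρ₀, hρ₀, near⟩ := exists_abs_det_sub_lt_one_of_near_isSO hn
  refine ⟨ρ₀, hρ₀, ?_⟩
  rintro A _ _ ι O z m ρ hm hρ γ ⟨-, -, k, hk, hkγ⟩ γ' ⟨-, -, k', hk', hkγ'⟩
  have : NeZero n := ⟨hn.pos.ne'⟩
  have lt_one := near _ _ k k' hk hk' (fun i j => (hkγ i j).trans_le hρ)
    fun i j => (hkγ' i j).trans_le hρ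
  rwa [← smul_sub, ← sub_mul, ← mul_sub, ← map_sub, det_rpow_smul_conj z m.cast_nonneg, abs_div,
    Nat.abs_cast, div_lt_one (by positivity)] at lt_one

theorem finite_and_ncard_le_of_encard_le {α : Type*} {s : Set α} {k : ℕ} (h : s.encard ≤ k) :
    s.Finite ∧ s.ncard ≤ k :=
  have finite := Set.finite_of_encard_le_coe h
  ⟨finite, by rwa [← finite.cast_ncard_eq, Nat.cast_le] at h⟩

theorem stmt16_general (hn : Odd n) : ∃ ρ₀ : ℝ, 0 < ρ₀ ∧ ∀ ε : ℝ, 0 < ε → ∃ C : ℝ, 0 < C ∧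
    ∀ (A : Type u) [DivisionRing A] [CharZero A] (ι : A →ₐ[ℚ] Matrix (Fin n) (Fin n) ℝ),
      Subalgebra.center ℚ A = ⊥ → Module.finrank ℚ A = n ^ 2 →
      ∀ O O' : Subring A, IsOrder A O' → O ≤ O' → ∀ D : ℕ, IsDisc ι O' D →
      ∀ (z : GeneralLinearGroup (Fin n) ℝ) (ρ : ℝ), ρ ≤ ρ₀ → ∀ m : ℕ, m ≠ 0 → m.Coprime D →
      (OSet ι O z m ρ).Finite ∧
        ((OSet ι O z m ρ).ncard : ℝ) ≤ C * (m : ℝ) ^ ((n : ℝ) - 1 + ε) := by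
  obtain ⟨ρ₀, hρ₀, det_sub_lt⟩ := exists_abs_det_sub_lt_of_mem_OSet hn
  refine ⟨ρ₀, hρ₀, fun ε hε => ?_⟩
  obtain ⟨k, rfl⟩ := Nat.exists_eq_add_one.mpr hn.pos
  obtain ⟨C, hC, divisor_bound⟩ := exists_card_divisors_mul_self_pow_le_mul_rpow k hε
  refine ⟨C, hC, fun A _ _ ι hcenter hrank O O' hO' hle D hD z ρ hρ m hm hmD => ?_⟩
  have encard_le : (OSet ι O z m ρ).encard ≤ ((m.divisors.card * m) ^ k : ℕ) := by
    push_cast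
    exact (encard_le_encard_setOf_index_eq hcenter hrank hO' hD hm hmD (fun γ hγ => hle hγ.1)
      (fun γ hγ => hγ.2.1) (det_sub_lt hm hρ)).trans (encard_setOf_index_eq_pi_int_le k hm)
  obtain ⟨finite, ncard_le⟩ := finite_and_ncard_le_of_encard_le encard_le
  refine ⟨finite, ?_⟩
  calc ((OSet ι O z m ρ).ncard : ℝ) ≤ ((m.divisors.card * m : ℕ) : ℝ) ^ k := by
        exact_mod_cast ncard_le
    _ ≤ C * (m : ℝ) ^ (k + ε) := divisor_bound m hm
    _ = C * (m : ℝ) ^ (((k + 1 : ℕ) : ℝ) - 1 + ε) := by rw [Nat.cast_add_one, add_sub_cancel_right]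

end Order

/-- For odd `n ≥ 3` there is `ρ₀ > 0` depending only on `n`, and for every
`ε > 0` a constant `C > 0` depending only on `n, ε`, such that for every maximal order
`𝒪_max ⊇ 𝒪`, every `ρ ∈ (0, ρ₀]` and every positive integer `m` coprime to `disc 𝒪_max`,
the set `𝒪(m; z, ρ)` is finite with `#𝒪(m; z, ρ) ≤ C·m^(n-1+ε)`. -/
theorem stmt16 (n : ℕ) (hn : 3 ≤ n) (hodd : Odd n) :
    ∃ ρ₀ : ℝ, 0 < ρ₀ ∧
      ∀ ε : ℝ, 0 < ε →
      ∃ C : ℝ, 0 < C ∧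
        ∀ (A : Type) [DivisionRing A] [CharZero A]
          (ι : A →ₐ[ℚ] Matrix (Fin n) (Fin n) ℝ),
          Function.Injective ι →
          Subalgebra.center ℚ A = ⊥ →
          Module.finrank ℚ A = n ^ 2 →
          ∀ O Omax : Subring A, IsOrder A O → IsOrder A Omax → O ≤ Omax →
          (∀ O' : Subring A, IsOrder A O' → Omax ≤ O' → O' = Omax) →
          ∀ D : ℕ, IsDisc ι Omax D →
          ∀ z : Matrix.GeneralLinearGroup (Fin n) ℝ,
          ∀ ρ : ℝ, 0 < ρ → ρ ≤ ρ₀ →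
          ∀ m : ℕ, 1 ≤ m → Nat.Coprime m D →
          (OSet ι O z m ρ).Finite ∧
            ((OSet ι O z m ρ).ncard : ℝ) ≤ C * (m : ℝ) ^ ((n : ℝ) - 1 + ε) := by
  obtain ⟨ρ₀, hρ₀, bound⟩ := stmt16_general hodd
  refine ⟨ρ₀, hρ₀, fun ε hε => ?_⟩
  obtain ⟨C, hC, le⟩ := bound ε hε
  exact ⟨C, hC, fun A _ _ ι _ hcenter hrank O Omax _ hOmax hle _ D hD z ρ _ hρ m hm hmD =>
    le A ι hcenter hrank O Omax hOmax hle D hD z ρ hρ m (Nat.one_le_iff_ne_zero.mp hm) hmD⟩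
end
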